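/- Let (η, ϕ) be a smooth solution of the three-dimensional water-wave system on [0,T]. Then 𝓑(T) = (T/2)·𝓗 + P + I₁ + I₂ + I₃, where 𝓗 := 𝓗(0) (the energy 𝓗(t) being independent of t), P := (1/2)∫₀ᵀ [ L₁∫₀^{L₂}∫₋ₕ^{η(t,L₁,x₂)} |∇_{x,y}ϕ(t,L₁,x₂,y)|² dy dx₂ + L₂∫₀^{L₁}∫₋ₕ^{η(t,x₁,L₂)} |∇_{x,y}ϕ(t,x₁,L₂,y)|² dy dx₁ + h∬_Q |∇_{x,y}ϕ(t,x,−h)|² dx ] dt, I₁ := (9/8)∫₀ᵀ∬_Q η(t,x)·|∇ₓϕ(t,x,−h)|² dx dt, I₂ := −(9/4)∫₀ᵀ∭_{Ω(t)} (∂_yϕ)·(∇η·∇ₓϕ) dy dx dt, and I₃ := −(3/4)[∬_Q η ψ dx]ₜ₌₀^{t=T} − [∬_Q η·(x·∇ψ) dx]ₜ₌₀^{t=T}, with [F(t)]ₜ₌₀^{t=T} denoting F(T) − F(0). -/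

import Mathlib

open Real Set MeasureTheory

noncomputable section

/-- `∂_{x₁}ϕ(t,x₁,x₂,y)` -/
def phiX1 (ϕ : ℝ → ℝ → ℝ → ℝ → ℝ) (t x₁ x₂ y : ℝ) : ℝ := deriv (fun s => ϕ t s x₂ y) x₁

/-- `∂_{x₂}ϕ(t,x₁,x₂,y)` -/
def phiX2 (ϕ : ℝ → ℝ → ℝ → ℝ → ℝ) (t x₁ x₂ y : ℝ) : ℝ := deriv (fun s => ϕ t x₁ s y) x₂

/-- `∂_yϕ(t,x₁,x₂,y)` -/
def phiY3 (ϕ : ℝ → ℝ → ℝ → ℝ → ℝ) (t x₁ x₂ y : ℝ) : ℝ := deriv (fun s => ϕ t x₁ x₂ s) y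

/-- `∂ₜϕ(t,x₁,x₂,y)` -/
def phiT3 (ϕ : ℝ → ℝ → ℝ → ℝ → ℝ) (t x₁ x₂ y : ℝ) : ℝ := deriv (fun s => ϕ s x₁ x₂ y) t

/-- `|∇_{x,y}ϕ|²(t,x₁,x₂,y)` -/
def gradSq3 (ϕ : ℝ → ℝ → ℝ → ℝ → ℝ) (t x₁ x₂ y : ℝ) : ℝ :=
  (phiX1 ϕ t x₁ x₂ y) ^ 2 + (phiX2 ϕ t x₁ x₂ y) ^ 2 + (phiY3 ϕ t x₁ x₂ y) ^ 2

/-- `|∇ₓϕ|²(t,x₁,x₂,y)` (horizontal gradient) -/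
def gradXSq3 (ϕ : ℝ → ℝ → ℝ → ℝ → ℝ) (t x₁ x₂ y : ℝ) : ℝ :=
  (phiX1 ϕ t x₁ x₂ y) ^ 2 + (phiX2 ϕ t x₁ x₂ y) ^ 2

/-- `∂_{x₁}η(t,x₁,x₂)` -/
def etaX1 (η : ℝ → ℝ → ℝ → ℝ) (t x₁ x₂ : ℝ) : ℝ := deriv (fun s => η t s x₂) x₁

/-- `∂_{x₂}η(t,x₁,x₂)` -/
def etaX2 (η : ℝ → ℝ → ℝ → ℝ) (t x₁ x₂ : ℝ) : ℝ := deriv (fun s => η t x₁ s) x₂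

/-- `∂ₜη(t,x₁,x₂)` -/
def etaT3 (η : ℝ → ℝ → ℝ → ℝ) (t x₁ x₂ : ℝ) : ℝ := deriv (fun s => η s x₁ x₂) t

/-- the trace `ψ(t,x) = ϕ(t,x,η(t,x))` -/
def psi3 (η : ℝ → ℝ → ℝ → ℝ) (ϕ : ℝ → ℝ → ℝ → ℝ → ℝ) (t x₁ x₂ : ℝ) : ℝ :=
  ϕ t x₁ x₂ (η t x₁ x₂)

/-- `∂ₜψ(t,x₁,x₂)` -/
def psi3T (η : ℝ → ℝ → ℝ → ℝ) (ϕ : ℝ → ℝ → ℝ → ℝ → ℝ) (t x₁ x₂ : ℝ) : ℝ :=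
  deriv (fun s => psi3 η ϕ s x₁ x₂) t

/-- `∂_{x₁}ψ(t,x₁,x₂)` -/
def psi3X1 (η : ℝ → ℝ → ℝ → ℝ) (ϕ : ℝ → ℝ → ℝ → ℝ → ℝ) (t x₁ x₂ : ℝ) : ℝ :=
  deriv (fun s => psi3 η ϕ t s x₂) x₁

/-- `∂_{x₂}ψ(t,x₁,x₂)` -/
def psi3X2 (η : ℝ → ℝ → ℝ → ℝ) (ϕ : ℝ → ℝ → ℝ → ℝ → ℝ) (t x₁ x₂ : ℝ) : ℝ :=
  deriv (fun s => psi3 η ϕ t x₁ s) x₂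

/-- `Θ(t,x) = -η ∂ₜψ - (g/2) η²` -/
def Theta3 (g : ℝ) (η : ℝ → ℝ → ℝ → ℝ) (ϕ : ℝ → ℝ → ℝ → ℝ → ℝ) (t x₁ x₂ : ℝ) : ℝ :=
  -(η t x₁ x₂) * psi3T η ϕ t x₁ x₂ - g / 2 * (η t x₁ x₂) ^ 2

/-- the energy `𝓗(t)` -/
def energy3D (L₁ L₂ h g : ℝ) (η : ℝ → ℝ → ℝ → ℝ) (ϕ : ℝ → ℝ → ℝ → ℝ → ℝ) (t : ℝ) : ℝ :=
  g / 2 * (∫ x₁ in (0:ℝ)..L₁, ∫ x₂ in (0:ℝ)..L₂, (η t x₁ x₂) ^ 2)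
    + 1 / 2 * ∫ x₁ in (0:ℝ)..L₁, ∫ x₂ in (0:ℝ)..L₂, ∫ y in (-h)..(η t x₁ x₂),
        gradSq3 ϕ t x₁ x₂ y

/-- the boundary observation `𝓑(T)` -/
def bigB (L₁ L₂ g T : ℝ) (η : ℝ → ℝ → ℝ → ℝ) (ϕ : ℝ → ℝ → ℝ → ℝ → ℝ) : ℝ :=
  ∫ t in (0:ℝ)..T,
    (L₁ * (∫ x₂ in (0:ℝ)..L₂, Theta3 g η ϕ t L₁ x₂)
      + L₂ * ∫ x₁ in (0:ℝ)..L₁, Theta3 g η ϕ t x₁ L₂)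

/-- the positive boundary term `P` -/
def bigP (L₁ L₂ h T : ℝ) (η : ℝ → ℝ → ℝ → ℝ) (ϕ : ℝ → ℝ → ℝ → ℝ → ℝ) : ℝ :=
  1 / 2 * ∫ t in (0:ℝ)..T,
    (L₁ * (∫ x₂ in (0:ℝ)..L₂, ∫ y in (-h)..(η t L₁ x₂), gradSq3 ϕ t L₁ x₂ y)
      + L₂ * (∫ x₁ in (0:ℝ)..L₁, ∫ y in (-h)..(η t x₁ L₂), gradSq3 ϕ t x₁ L₂ y)
      + h * ∫ x₁ in (0:ℝ)..L₁, ∫ x₂ in (0:ℝ)..L₂, gradSq3 ϕ t x₁ x₂ (-h))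

/-- A smooth solution of the three-dimensional water-wave system on `[0,T]`,
in the tank over `Q = [0,L₁] × [0,L₂]`. -/
structure IsWW3D (L₁ L₂ h g T : ℝ) (η : ℝ → ℝ → ℝ → ℝ)
    (ϕ : ℝ → ℝ → ℝ → ℝ → ℝ) : Prop where
  smooth_eta : ContDiff ℝ (⊤ : ℕ∞) (fun p : ℝ × ℝ × ℝ => η p.1 p.2.1 p.2.2)
  smooth_phi : ContDiff ℝ (⊤ : ℕ∞) (fun p : ℝ × ℝ × ℝ × ℝ => ϕ p.1 p.2.1 p.2.2.1 p.2.2.2)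
  eta_lower : ∀ t ∈ Icc (0:ℝ) T, ∀ x₁ ∈ Icc (0:ℝ) L₁, ∀ x₂ ∈ Icc (0:ℝ) L₂,
    -h / 2 ≤ η t x₁ x₂
  eta_mean : ∀ t ∈ Icc (0:ℝ) T,
    (∫ x₁ in (0:ℝ)..L₁, ∫ x₂ in (0:ℝ)..L₂, η t x₁ x₂) = 0
  laplace : ∀ t ∈ Icc (0:ℝ) T, ∀ x₁ ∈ Icc (0:ℝ) L₁, ∀ x₂ ∈ Icc (0:ℝ) L₂,
    ∀ y ∈ Icc (-h) (η t x₁ x₂),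
      deriv (fun s => phiX1 ϕ t s x₂ y) x₁ + deriv (fun s => phiX2 ϕ t x₁ s y) x₂
        + deriv (fun s => phiY3 ϕ t x₁ x₂ s) y = 0
  bc_x1 : ∀ t ∈ Icc (0:ℝ) T, ∀ x₁ ∈ ({0, L₁} : Set ℝ), ∀ x₂ ∈ Icc (0:ℝ) L₂,
    ∀ y ∈ Icc (-h) (η t x₁ x₂), phiX1 ϕ t x₁ x₂ y = 0
  bc_x2 : ∀ t ∈ Icc (0:ℝ) T, ∀ x₂ ∈ ({0, L₂} : Set ℝ), ∀ x₁ ∈ Icc (0:ℝ) L₁,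
    ∀ y ∈ Icc (-h) (η t x₁ x₂), phiX2 ϕ t x₁ x₂ y = 0
  bc_bottom : ∀ t ∈ Icc (0:ℝ) T, ∀ x₁ ∈ Icc (0:ℝ) L₁, ∀ x₂ ∈ Icc (0:ℝ) L₂,
    phiY3 ϕ t x₁ x₂ (-h) = 0
  kinematic : ∀ t ∈ Icc (0:ℝ) T, ∀ x₁ ∈ Icc (0:ℝ) L₁, ∀ x₂ ∈ Icc (0:ℝ) L₂,
    etaT3 η t x₁ x₂
      = phiY3 ϕ t x₁ x₂ (η t x₁ x₂)
        - (etaX1 η t x₁ x₂ * phiX1 ϕ t x₁ x₂ (η t x₁ x₂)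
            + etaX2 η t x₁ x₂ * phiX2 ϕ t x₁ x₂ (η t x₁ x₂))
  bernoulli : ∀ t ∈ Icc (0:ℝ) T, ∀ x₁ ∈ Icc (0:ℝ) L₁, ∀ x₂ ∈ Icc (0:ℝ) L₂,
    phiT3 ϕ t x₁ x₂ (η t x₁ x₂)
      + 1 / 2 * ((phiX1 ϕ t x₁ x₂ (η t x₁ x₂)) ^ 2
          + (phiX2 ϕ t x₁ x₂ (η t x₁ x₂)) ^ 2 + (phiY3 ϕ t x₁ x₂ (η t x₁ x₂)) ^ 2)
      + g * η t x₁ x₂ = 0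
  etaX1_bc : ∀ t ∈ Icc (0:ℝ) T, ∀ x₁ ∈ ({0, L₁} : Set ℝ), ∀ x₂ ∈ Icc (0:ℝ) L₂,
    etaX1 η t x₁ x₂ = 0
  etaX2_bc : ∀ t ∈ Icc (0:ℝ) T, ∀ x₂ ∈ ({0, L₂} : Set ℝ), ∀ x₁ ∈ Icc (0:ℝ) L₁,
    etaX2 η t x₁ x₂ = 0


/-
Testing Laplace's equation against a function `w` turns `∭ ∇w · ∇ϕ` into the surface integral of
`w ∂ₜη`. The weights `ϕ` and `∂ₜϕ` give the derivative of `∬ η ψ` and the conservation of energy.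
The weight `X · ∇ϕ` (a Rellich identity) with `X = (x, y)` expresses `∭ |∇ϕ|²` through the walls
`x₁ = L₁`, `x₂ = L₂`, the bottom and the surface, and with the vertical field `X = η e_y` it
expresses the flux term `I₂` through the bottom term `I₁` and the surface. On the surface
Bernoulli's equation gives `∂ₜψ + g η = ∂_yϕ ∂ₜη - ½ |∇ϕ|²`, and `∬ (2 Θ + x · ∇Θ)` is exactly the
boundary observation, since the dilation field has no flux through `x₁ = 0` and `x₂ = 0`. Hence
the time derivative of `∬ η (x · ∇ψ)` involves, besides the observation and the boundary terms,
only `∭ |∇ϕ|²`, `∬ η ∂ₜψ` and `∬ η²`. Adding `¾ ∬ η ψ` and eliminating `∬ η ∂ₜψ` through the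
relation for `I₂` leaves half of the conserved energy, and integrating in time concludes.
-/

/-- The derivative of `f` at `p` along the vector `v`, arranged so that `∂[v] f` is again a function
on the domain of `f`. -/
def dirDeriv {E F : Type*} [NormedAddCommGroup E] [NormedSpace ℝ E] [NormedAddCommGroup F]
    [NormedSpace ℝ F] (v : E) (f : E → F) (p : E) : F :=
  fderiv ℝ f p v

local notation "∂[" v "]" => dirDeriv v

section DirectionalDerivative

variable {E F G : Type*} [NormedAddCommGroup E] [NormedSpace ℝ E]
  [NormedAddCommGroup F] [NormedSpace ℝ F] [NormedAddCommGroup G] [NormedSpace ℝ G]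

@[fun_prop]
theorem continuous_dirDeriv {v : E} {f : E → F} (hf : ContDiff ℝ 1 f) : Continuous (∂[v] f) :=
  (hf.continuous_fderiv one_ne_zero).clm_apply continuous_const

@[fun_prop]
theorem contDiff_dirDeriv {v : E} {f : E → F} (hf : ContDiff ℝ 2 f) : ContDiff ℝ 1 (∂[v] f) :=
  (hf.fderiv_right (m := 1) (by norm_num)).clm_apply contDiff_const

theorem dirDeriv_comm {f : E → F} (hf : ContDiff ℝ 2 f) (v w : E) :
    ∂[v] (∂[w] f) = ∂[w] (∂[v] f) := by
  have hd : Differentiable ℝ (fderiv ℝ f) :=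
    (hf.fderiv_right (m := 1) (by norm_num)).differentiable one_ne_zero
  have hsecond (p v w : E) : ∂[v] (∂[w] f) p = fderiv ℝ (fderiv ℝ f) p v w := by
    change fderiv ℝ (fun q => fderiv ℝ f q w) p v = _
    simp [fderiv_clm_apply (hd p) (differentiableAt_const w)]
  funext p
  rw [hsecond, hsecond]
  exact (hf.contDiffAt.isSymmSndFDerivAt (by simp)) v w

theorem dirDeriv_comp {f : F → G} {g : E → F} {g' : E →L[ℝ] F} {p : E}
    (hf : DifferentiableAt ℝ f (g p)) (hg : HasFDerivAt g g' p) (v : E) :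
    ∂[v] (fun x => f (g x)) p = ∂[g' v] f (g p) :=
  congrArg (· v) (hf.hasFDerivAt.comp p hg).fderiv

theorem hasDerivAt_comp_dirDeriv {f : E → F} {γ : ℝ → E} {v : E} {s : ℝ}
    (hf : DifferentiableAt ℝ f (γ s)) (hγ : HasDerivAt γ v s) :
    HasDerivAt (fun s => f (γ s)) (∂[v] f (γ s)) s :=
  hf.hasFDerivAt.comp_hasDerivAt s hγ

theorem dirDeriv_id (v p : E) : ∂[v] (fun x : E => x) p = v := by simp [dirDeriv]

theorem dirDeriv_const (v p : E) (a : F) : ∂[v] (fun _ : E => a) p = 0 := by simp [dirDeriv]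

theorem dirDeriv_fst {f : E → F × G} {p : E} (hf : DifferentiableAt ℝ f p) (v : E) :
    ∂[v] (fun x => (f x).1) p = (∂[v] f p).1 := by
  simp [dirDeriv, fderiv.fst hf]

theorem dirDeriv_snd {f : E → F × G} {p : E} (hf : DifferentiableAt ℝ f p) (v : E) :
    ∂[v] (fun x => (f x).2) p = (∂[v] f p).2 := by
  simp [dirDeriv, fderiv.snd hf]

theorem dirDeriv_add {f g : E → F} {p : E} (hf : DifferentiableAt ℝ f p)
    (hg : DifferentiableAt ℝ g p) (v : E) :
    ∂[v] (fun x => f x + g x) p = ∂[v] f p + ∂[v] g p := by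
  simp [dirDeriv, fderiv_fun_add hf hg]

theorem dirDeriv_neg (f : E → F) (p v : E) : ∂[v] (fun x => -f x) p = -∂[v] f p := by
  simp [dirDeriv]

theorem dirDeriv_mul {f g : E → ℝ} {p : E} (hf : DifferentiableAt ℝ f p)
    (hg : DifferentiableAt ℝ g p) (v : E) :
    ∂[v] (fun x => f x * g x) p = ∂[v] f p * g p + f p * ∂[v] g p := by
  simp [dirDeriv, fderiv_fun_mul hf hg, mul_comm, add_comm]

theorem continuous_fderiv_comp_inl {f : E × ℝ → ℝ} (hf : ContDiff ℝ 1 f) :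
    Continuous fun q : E × ℝ => fderiv ℝ f q ∘L .inl ℝ E ℝ :=
  (hf.continuous_fderiv one_ne_zero).clm_comp continuous_const

theorem continuous_integral_fderiv_comp_inl {f : E × ℝ → ℝ} (hf : ContDiff ℝ 1 f) (a : ℝ) :
    Continuous fun q : E × ℝ => ∫ z in a..q.2, fderiv ℝ f (q.1, z) ∘L .inl ℝ E ℝ :=
  intervalIntegral.continuous_parametric_intervalIntegral_of_continuous
    (f := fun (q : E × ℝ) z => fderiv ℝ f (q.1, z) ∘L .inl ℝ E ℝ)
    ((continuous_fderiv_comp_inl hf).comp (by fun_prop)) continuous_snd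

theorem hasFDerivAt_integral_of_contDiff [ProperSpace E] {f : E × ℝ → ℝ} (hf : ContDiff ℝ 1 f)
    (a b : ℝ) (p : E) :
    HasFDerivAt (fun p => ∫ z in a..b, f (p, z))
      (∫ z in a..b, fderiv ℝ f (p, z) ∘L .inl ℝ E ℝ) p := by
  have hf' := continuous_fderiv_comp_inl hf
  obtain ⟨C, hC⟩ := ((isCompact_closedBall p 1).prod isCompact_uIcc).exists_bound_of_continuousOn
    (s := _ ×ˢ uIcc a b) hf'.continuousOn
  refine intervalIntegral.hasFDerivAt_integral_of_dominated_of_fderiv_le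
    (F' := fun p z => fderiv ℝ f (p, z) ∘L .inl ℝ E ℝ) (bound := fun _ => C)
    (Metric.closedBall_mem_nhds p one_pos) ?_ ?_ ?_ ?_ intervalIntegrable_const ?_
  · exact .of_forall fun x => (by fun_prop : Continuous fun z => f (x, z)).aestronglyMeasurable
  · exact (by fun_prop : Continuous fun z => f (p, z)).intervalIntegrable a b
  · exact (hf'.comp (Continuous.prodMk_right p)).aestronglyMeasurable
  · exact .of_forall fun z hz x hx => hC (x, z) ⟨hx, uIoc_subset_uIcc hz⟩
  · exact .of_forall fun z _ x _ =>
      (hf.differentiable one_ne_zero (x, z)).hasFDerivAt.comp x (hasFDerivAt_prodMk_left x z)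

theorem hasFDerivAt_primitive_of_contDiff [ProperSpace E] {f : E × ℝ → ℝ} (hf : ContDiff ℝ 1 f)
    (a : ℝ) (q : E × ℝ) :
    HasFDerivAt (fun q : E × ℝ => ∫ z in a..q.2, f (q.1, z))
      ((∫ z in a..q.2, fderiv ℝ f (q.1, z) ∘L .inl ℝ E ℝ) ∘L .fst ℝ E ℝ
        + f q • .snd ℝ E ℝ) q := by
  have hx := continuous_integral_fderiv_comp_inl hf a
  have hy : Continuous fun q : E × ℝ => ContinuousLinearMap.toSpanSingleton ℝ (f q) :=
    (ContinuousLinearMap.toSpanSingletonCLE (𝕜 := ℝ) (E := ℝ)).continuous.comp hf.continuous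
  refine (hasStrictFDerivAt_uncurry_coprod (𝕜 := ℝ) (u := q)
    (f := fun p b => ∫ z in a..b, f (p, z))
    (f₁ := fun p b => ∫ z in a..b, fderiv ℝ f (p, z) ∘L .inl ℝ E ℝ)
    (f₂ := fun p b => .toSpanSingleton ℝ (f (p, b)))
    (.of_forall fun q => hasFDerivAt_integral_of_contDiff hf a q.2 q.1)
    (.of_forall fun q => ?_) hx.continuousAt hy.continuousAt).hasFDerivAt.congr_fderiv ?_
  · have hfq : Continuous fun z => f (q.1, z) := by fun_prop
    exact (hfq.integral_hasStrictDerivAt a q.2).hasDerivAt.hasFDerivAt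
  · ext <;> simp [Function.HasUncurry.uncurry]

theorem contDiff_integral [ProperSpace E] {f : E × ℝ → ℝ} {b : E → ℝ}
    (hf : ContDiff ℝ 1 f) (hb : ContDiff ℝ 1 b) (a : ℝ) :
    ContDiff ℝ 1 fun p => ∫ z in a..b p, f (p, z) := by
  have hprim : ContDiff ℝ 1 fun q : E × ℝ => ∫ z in a..q.2, f (q.1, z) := by
    refine contDiff_one_iff_hasFDerivAt.2 ⟨_, ?_, hasFDerivAt_primitive_of_contDiff hf a⟩
    exact ((continuous_integral_fderiv_comp_inl hf a).clm_comp continuous_const).add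
      (hf.continuous.smul continuous_const)
  exact hprim.comp (contDiff_id.prodMk hb)

theorem dirDeriv_integral [ProperSpace E] {f : E × ℝ → ℝ} {b : E → ℝ} {p : E}
    (hf : ContDiff ℝ 1 f) (hb : DifferentiableAt ℝ b p) (a : ℝ) (v : E) :
    ∂[v] (fun p => ∫ z in a..b p, f (p, z)) p
      = (∫ z in a..b p, ∂[(v, 0)] f (p, z)) + f (p, b p) * ∂[v] b p := by
  have hf' : Continuous fun z => fderiv ℝ f (p, z) ∘L .inl ℝ E ℝ :=
    (continuous_fderiv_comp_inl hf).comp (Continuous.prodMk_right p)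
  have h := ((hasFDerivAt_primitive_of_contDiff hf a (p, b p)).comp p
      ((hasFDerivAt_id p).prodMk hb.hasFDerivAt)).fderiv
  refine (congrArg (· v) h).trans ?_
  simp [dirDeriv, ContinuousLinearMap.intervalIntegral_apply (hf'.intervalIntegrable _ _)]

theorem dirDeriv_comp_graph {f : E × ℝ → ℝ} {b : E → ℝ} {p : E}
    (hf : DifferentiableAt ℝ f (p, b p)) (hb : DifferentiableAt ℝ b p) (v : E) :
    ∂[v] (fun p => f (p, b p)) p = ∂[(v, 0)] f (p, b p) + ∂[(0, 1)] f (p, b p) * ∂[v] b p := by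
  rw [dirDeriv_comp (g := fun p => (p, b p)) hf ((hasFDerivAt_id p).prodMk hb.hasFDerivAt)]
  have hv : ((v, fderiv ℝ b p v) : E × ℝ) = (v, 0) + fderiv ℝ b p v • ((0, 1) : E × ℝ) := by simp
  change fderiv ℝ f (p, b p) (v, fderiv ℝ b p v) = _
  rw [hv, map_add, map_smul, smul_eq_mul, mul_comm]
  rfl

end DirectionalDerivative

section RectangleIntegral

/-- The integral over the rectangle `[0, L₁] × [0, L₂]`, as an iterated integral. -/
def rectIntegral (L₁ L₂ : ℝ) (f : ℝ × ℝ → ℝ) : ℝ :=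
  ∫ x₁ in (0 : ℝ)..L₁, ∫ x₂ in (0 : ℝ)..L₂, f (x₁, x₂)

variable {E : Type*} [NormedAddCommGroup E] [NormedSpace ℝ E] {L₁ L₂ : ℝ} {f g : ℝ × ℝ → ℝ}

theorem rectIntegral_add (hf : Continuous f) (hg : Continuous g) :
    rectIntegral L₁ L₂ (fun p => f p + g p) = rectIntegral L₁ L₂ f + rectIntegral L₁ L₂ g := by
  have hinner (x₁ : ℝ) : ∫ x₂ in (0 : ℝ)..L₂, (f (x₁, x₂) + g (x₁, x₂))
      = (∫ x₂ in (0 : ℝ)..L₂, f (x₁, x₂)) + ∫ x₂ in (0 : ℝ)..L₂, g (x₁, x₂) :=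
    intervalIntegral.integral_add (Continuous.intervalIntegrable (by fun_prop) _ _)
      (Continuous.intervalIntegrable (by fun_prop) _ _)
  simp only [rectIntegral, hinner]
  exact intervalIntegral.integral_add (Continuous.intervalIntegrable (by fun_prop) _ _)
    (Continuous.intervalIntegrable (by fun_prop) _ _)

theorem rectIntegral_const_mul (a : ℝ) (f : ℝ × ℝ → ℝ) :
    rectIntegral L₁ L₂ (fun p => a * f p) = a * rectIntegral L₁ L₂ f := by
  simp [rectIntegral]

theorem rectIntegral_sub (hf : Continuous f) (hg : Continuous g) :
    rectIntegral L₁ L₂ (fun p => f p - g p) = rectIntegral L₁ L₂ f - rectIntegral L₁ L₂ g := by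
  have h := rectIntegral_add (L₁ := L₁) (L₂ := L₂) hf (hg.const_mul (-1))
  rw [rectIntegral_const_mul] at h
  simpa [sub_eq_add_neg] using h

theorem rectIntegral_congr (hL₁ : 0 ≤ L₁) (hL₂ : 0 ≤ L₂)
    (h : ∀ p ∈ Icc 0 L₁ ×ˢ Icc 0 L₂, f p = g p) :
    rectIntegral L₁ L₂ f = rectIntegral L₁ L₂ g := by
  refine intervalIntegral.integral_congr fun x₁ hx₁ =>
    intervalIntegral.integral_congr fun x₂ hx₂ => ?_
  rw [uIcc_of_le hL₁] at hx₁
  rw [uIcc_of_le hL₂] at hx₂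
  exact h (x₁, x₂) ⟨hx₁, hx₂⟩

theorem rectIntegral_divergence (hf : ContDiff ℝ 1 f) (hg : ContDiff ℝ 1 g) :
    rectIntegral L₁ L₂ (fun p => ∂[(1, 0)] f p + ∂[(0, 1)] g p)
      = ((∫ x₂ in (0 : ℝ)..L₂, f (L₁, x₂)) - ∫ x₂ in (0 : ℝ)..L₂, f (0, x₂))
        + ((∫ x₁ in (0 : ℝ)..L₁, g (x₁, L₂)) - ∫ x₁ in (0 : ℝ)..L₁, g (x₁, 0)) := by
  have h := integral2_divergence_prod_of_hasFDerivAt f g (fderiv ℝ f) (fderiv ℝ g) 0 0 L₁ L₂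
    hf.continuous.continuousOn hg.continuous.continuousOn
    (fun p _ => (hf.differentiable one_ne_zero p).hasFDerivAt)
    (fun p _ => (hg.differentiable one_ne_zero p).hasFDerivAt) ?_
  · refine h.trans ?_
    ring
  · have hdiv : Continuous fun p => ∂[(1, 0)] f p + ∂[(0, 1)] g p := by fun_prop
    exact hdiv.continuousOn.integrableOn_compact (isCompact_uIcc.prod isCompact_uIcc)

theorem contDiff_rectIntegral [ProperSpace E] {f : E × ℝ × ℝ → ℝ} (hf : ContDiff ℝ 1 f) :
    ContDiff ℝ 1 fun a => rectIntegral L₁ L₂ fun p => f (a, p) :=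
  contDiff_integral (f := fun q : E × ℝ => ∫ x₂ in (0 : ℝ)..L₂, f (q.1, q.2, x₂))
    (contDiff_integral (f := fun q : (E × ℝ) × ℝ => f (q.1.1, q.1.2, q.2)) (by fun_prop)
      contDiff_const 0) contDiff_const 0

theorem dirDeriv_rectIntegral [ProperSpace E] {f : E × ℝ × ℝ → ℝ} (hf : ContDiff ℝ 1 f)
    (v a : E) :
    ∂[v] (fun a => rectIntegral L₁ L₂ fun p => f (a, p)) a
      = rectIntegral L₁ L₂ fun p => ∂[(v, 0)] f (a, p) := by
  let assoc := (ContinuousLinearEquiv.prodAssoc ℝ E ℝ ℝ : (E × ℝ) × ℝ →L[ℝ] E × ℝ × ℝ)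
  have hassoc : ContDiff ℝ 1 fun q => f (assoc q) := hf.comp assoc.contDiff
  have hdiff : Differentiable ℝ f := hf.differentiable one_ne_zero
  have hinner (x₁ : ℝ) : ∂[(v, 0)] (fun q : E × ℝ => ∫ x₂ in (0 : ℝ)..L₂, f (q.1, q.2, x₂)) (a, x₁)
      = ∫ x₂ in (0 : ℝ)..L₂, ∂[(v, 0)] f (a, x₁, x₂) := by
    refine (dirDeriv_integral hassoc (differentiableAt_const L₂) 0 (v, 0)).trans ?_
    simp only [dirDeriv_const, mul_zero, add_zero, dirDeriv_comp (hdiff _) assoc.hasFDerivAt]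
    rfl
  refine (dirDeriv_integral (f := fun q : E × ℝ => ∫ x₂ in (0 : ℝ)..L₂, f (q.1, q.2, x₂))
    (contDiff_integral hassoc contDiff_const 0) (differentiableAt_const L₁) 0 v).trans ?_
  simp only [dirDeriv_const, mul_zero, add_zero, hinner, rectIntegral]

theorem hasDerivAt_rectIntegral {f : ℝ × ℝ × ℝ → ℝ} (hf : ContDiff ℝ 1 f) (t : ℝ) :
    HasDerivAt (fun t => rectIntegral L₁ L₂ fun p => f (t, p))
      (rectIntegral L₁ L₂ fun p => ∂[(1, 0)] f (t, p)) t := by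
  rw [← dirDeriv_rectIntegral hf]
  exact hasDerivAt_comp_dirDeriv
    ((contDiff_rectIntegral hf).differentiable one_ne_zero t) (hasDerivAt_id t)

theorem rectIntegral_dilation (hf : ContDiff ℝ 1 f) :
    rectIntegral L₁ L₂ (fun p => 2 * f p + (p.1 * ∂[(1, 0)] f p + p.2 * ∂[(0, 1)] f p))
      = L₁ * (∫ x₂ in (0 : ℝ)..L₂, f (L₁, x₂)) + L₂ * ∫ x₁ in (0 : ℝ)..L₁, f (x₁, L₂) := by
  have hdiff : Differentiable ℝ f := hf.differentiable one_ne_zero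
  have h := rectIntegral_divergence (L₁ := L₁) (L₂ := L₂) (f := fun p => p.1 * f p)
    (g := fun p => p.2 * f p) (by fun_prop) (by fun_prop)
  simp only [zero_mul, intervalIntegral.integral_const_mul, intervalIntegral.integral_zero,
    sub_zero] at h
  rw [← h]
  congr 1 with p
  simp (disch := fun_prop) only [dirDeriv_mul, dirDeriv_fst, dirDeriv_snd, dirDeriv_id]
  ring

end RectangleIntegral

section TankIntegral

/-- The integral over the region `c ≤ z ≤ e x` above the rectangle `[0, L₁] × [0, L₂]`. -/
def tankIntegral (L₁ L₂ c : ℝ) (e : ℝ × ℝ → ℝ) (F : (ℝ × ℝ) × ℝ → ℝ) : ℝ :=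
  rectIntegral L₁ L₂ fun p => ∫ z in c..e p, F (p, z)

/-- The integral over the lateral wall `x₁ = a` of the region between `c` and `e`. -/
def wallIntegral₁ (L₂ c : ℝ) (e : ℝ × ℝ → ℝ) (F : (ℝ × ℝ) × ℝ → ℝ) (a : ℝ) : ℝ :=
  ∫ x₂ in (0 : ℝ)..L₂, ∫ z in c..e (a, x₂), F ((a, x₂), z)

/-- The integral over the lateral wall `x₂ = a` of the region between `c` and `e`. -/
def wallIntegral₂ (L₁ c : ℝ) (e : ℝ × ℝ → ℝ) (F : (ℝ × ℝ) × ℝ → ℝ) (a : ℝ) : ℝ :=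
  ∫ x₁ in (0 : ℝ)..L₁, ∫ z in c..e (x₁, a), F ((x₁, a), z)

variable {L₁ L₂ c : ℝ} {e : ℝ × ℝ → ℝ} {F G : (ℝ × ℝ) × ℝ → ℝ}

theorem tankIntegral_const_mul (a : ℝ) (F : (ℝ × ℝ) × ℝ → ℝ) :
    tankIntegral L₁ L₂ c e (fun q => a * F q) = a * tankIntegral L₁ L₂ c e F := by
  simp only [tankIntegral, intervalIntegral.integral_const_mul, rectIntegral_const_mul]

theorem tankIntegral_add (he : Continuous e) (hF : Continuous F) (hG : Continuous G) :
    tankIntegral L₁ L₂ c e (fun q => F q + G q)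
      = tankIntegral L₁ L₂ c e F + tankIntegral L₁ L₂ c e G := by
  simp only [tankIntegral]
  rw [← rectIntegral_add (by fun_prop) (by fun_prop)]
  exact congrArg (rectIntegral L₁ L₂) (funext fun p => intervalIntegral.integral_add
    (Continuous.intervalIntegrable (by fun_prop) _ _)
    (Continuous.intervalIntegrable (by fun_prop) _ _))

theorem tankIntegral_congr (hL₁ : 0 ≤ L₁) (hL₂ : 0 ≤ L₂)
    (hce : ∀ p ∈ Icc 0 L₁ ×ˢ Icc 0 L₂, c ≤ e p)
    (h : ∀ p ∈ Icc 0 L₁ ×ˢ Icc 0 L₂, ∀ z ∈ Icc c (e p), F (p, z) = G (p, z)) :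
    tankIntegral L₁ L₂ c e F = tankIntegral L₁ L₂ c e G :=
  rectIntegral_congr hL₁ hL₂ fun p hp => intervalIntegral.integral_congr fun z hz =>
    h p hp z (uIcc_of_le (hce p hp) ▸ hz)

theorem wallIntegral₁_congr {a : ℝ} (hL₂ : 0 ≤ L₂) (hce : ∀ x₂ ∈ Icc 0 L₂, c ≤ e (a, x₂))
    (h : ∀ x₂ ∈ Icc 0 L₂, ∀ z ∈ Icc c (e (a, x₂)), F ((a, x₂), z) = G ((a, x₂), z)) :
    wallIntegral₁ L₂ c e F a = wallIntegral₁ L₂ c e G a :=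
  intervalIntegral.integral_congr fun x₂ hx₂ => intervalIntegral.integral_congr fun z hz =>
    have hx₂' : x₂ ∈ Icc 0 L₂ := uIcc_of_le hL₂ ▸ hx₂
    h x₂ hx₂' z (uIcc_of_le (hce x₂ hx₂') ▸ hz)

theorem wallIntegral₂_congr {a : ℝ} (hL₁ : 0 ≤ L₁) (hce : ∀ x₁ ∈ Icc 0 L₁, c ≤ e (x₁, a))
    (h : ∀ x₁ ∈ Icc 0 L₁, ∀ z ∈ Icc c (e (x₁, a)), F ((x₁, a), z) = G ((x₁, a), z)) :
    wallIntegral₂ L₁ c e F a = wallIntegral₂ L₁ c e G a :=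
  intervalIntegral.integral_congr fun x₁ hx₁ => intervalIntegral.integral_congr fun z hz =>
    have hx₁' : x₁ ∈ Icc 0 L₁ := uIcc_of_le hL₁ ▸ hx₁
    h x₁ hx₁' z (uIcc_of_le (hce x₁ hx₁') ▸ hz)

theorem tankIntegral_divergence {A B C : (ℝ × ℝ) × ℝ → ℝ} (he : ContDiff ℝ 1 e)
    (hA : ContDiff ℝ 1 A) (hB : ContDiff ℝ 1 B) (hC : ContDiff ℝ 1 C) :
    tankIntegral L₁ L₂ c e (fun q => ∂[((1, 0), 0)] A q + ∂[((0, 1), 0)] B q + ∂[(0, 1)] C q)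
      = rectIntegral L₁ L₂ (fun p => C (p, e p) - A (p, e p) * ∂[(1, 0)] e p
          - B (p, e p) * ∂[(0, 1)] e p)
        - rectIntegral L₁ L₂ (fun p => C (p, c))
        + ((wallIntegral₁ L₂ c e A L₁ - wallIntegral₁ L₂ c e A 0)
          + (wallIntegral₂ L₁ c e B L₂ - wallIntegral₂ L₁ c e B 0)) := by
  have hIA := contDiff_integral hA he c
  have hIB := contDiff_integral hB he c
  have hFTC (p : ℝ × ℝ) : ∫ z in c..e p, ∂[(0, 1)] C (p, z) = C (p, e p) - C (p, c) :=
    intervalIntegral.integral_eq_sub_of_hasDerivAt (f := fun z => C (p, z))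
      (fun z _ => hasDerivAt_comp_dirDeriv (hC.differentiable one_ne_zero _)
        ((hasDerivAt_const z p).prodMk (hasDerivAt_id z)))
      (Continuous.intervalIntegrable (by fun_prop) _ _)
  have hdiv : Continuous fun p => ∂[(1, 0)] (fun p => ∫ z in c..e p, A (p, z)) p
      + ∂[(0, 1)] (fun p => ∫ z in c..e p, B (p, z)) p :=
    (continuous_dirDeriv hIA).add (continuous_dirDeriv hIB)
  simp only [wallIntegral₁, wallIntegral₂, ← rectIntegral_divergence hIA hIB]
  rw [← rectIntegral_sub (by fun_prop) (by fun_prop), ← rectIntegral_add (by fun_prop) hdiv]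
  refine congrArg (rectIntegral L₁ L₂) (funext fun p => ?_)
  rw [intervalIntegral.integral_add (Continuous.intervalIntegrable (by fun_prop) _ _)
      (Continuous.intervalIntegrable (by fun_prop) _ _), hFTC,
    intervalIntegral.integral_add (Continuous.intervalIntegrable (by fun_prop) _ _)
      (Continuous.intervalIntegrable (by fun_prop) _ _),
    dirDeriv_integral hA (he.differentiable one_ne_zero p),
    dirDeriv_integral hB (he.differentiable one_ne_zero p)]
  ring

end TankIntegral

section PotentialFlow

variable {L₁ L₂ c : ℝ} {e : ℝ × ℝ → ℝ} {u w : (ℝ × ℝ) × ℝ → ℝ}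

/-- The pointwise inner product `∇u · ∇w` of the full gradients. -/
def gradDot (u w : (ℝ × ℝ) × ℝ → ℝ) (q : (ℝ × ℝ) × ℝ) : ℝ :=
  ∂[((1, 0), 0)] u q * ∂[((1, 0), 0)] w q + ∂[((0, 1), 0)] u q * ∂[((0, 1), 0)] w q
    + ∂[(0, 1)] u q * ∂[(0, 1)] w q

@[fun_prop]
theorem continuous_gradDot (hu : ContDiff ℝ 1 u) (hw : ContDiff ℝ 1 w) :
    Continuous (gradDot u w) := by
  unfold gradDot
  fun_prop

@[fun_prop]
theorem contDiff_gradDot (hu : ContDiff ℝ 2 u) (hw : ContDiff ℝ 2 w) :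
    ContDiff ℝ 1 (gradDot u w) := by
  unfold gradDot
  fun_prop

theorem gradDot_inner_grad {X₁ X₂ X₃ : (ℝ × ℝ) × ℝ → ℝ} (hu : ContDiff ℝ 2 u)
    (hX₁ : Differentiable ℝ X₁) (hX₂ : Differentiable ℝ X₂) (hX₃ : Differentiable ℝ X₃)
    (q : (ℝ × ℝ) × ℝ) :
    gradDot (fun q => X₁ q * ∂[((1, 0), 0)] u q + X₂ q * ∂[((0, 1), 0)] u q
        + X₃ q * ∂[(0, 1)] u q) u q
      = gradDot X₁ u q * ∂[((1, 0), 0)] u q + gradDot X₂ u q * ∂[((0, 1), 0)] u q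
        + gradDot X₃ u q * ∂[(0, 1)] u q
        - 1 / 2 * gradDot u u q * (∂[((1, 0), 0)] X₁ q + ∂[((0, 1), 0)] X₂ q + ∂[(0, 1)] X₃ q)
        + 1 / 2 * (∂[((1, 0), 0)] (fun q => gradDot u u q * X₁ q) q
          + ∂[((0, 1), 0)] (fun q => gradDot u u q * X₂ q) q
          + ∂[(0, 1)] (fun q => gradDot u u q * X₃ q) q) := by
  have hu' (v : (ℝ × ℝ) × ℝ) : Differentiable ℝ (∂[v] u) :=
    (contDiff_dirDeriv hu).differentiable one_ne_zero
  simp (disch := fun_prop) only [gradDot, dirDeriv_mul, dirDeriv_add]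
  rw [dirDeriv_comm hu (0, 1) ((1, 0), 0), dirDeriv_comm hu (0, 1) ((0, 1), 0),
    dirDeriv_comm hu ((0, 1), 0) ((1, 0), 0)]
  ring

/-- The flux of `∇u` through the graph of `e`, per unit horizontal area, that is `∇u · N` for the
upward normal `N = (-∇e, 1)` that is not normalized. -/
def surfaceFlux (e : ℝ × ℝ → ℝ) (u : (ℝ × ℝ) × ℝ → ℝ) (p : ℝ × ℝ) : ℝ :=
  ∂[(0, 1)] u (p, e p) - (∂[(1, 0)] e p * ∂[((1, 0), 0)] u (p, e p)
    + ∂[(0, 1)] e p * ∂[((0, 1), 0)] u (p, e p))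

@[fun_prop]
theorem continuous_surfaceFlux (he : ContDiff ℝ 1 e) (hu : ContDiff ℝ 1 u) :
    Continuous (surfaceFlux e u) := by
  unfold surfaceFlux
  fun_prop

/-- A `C²` potential flow in the tank over the rectangle `[0, L₁] × [0, L₂]` with flat bottom
`z = c` and surface `z = e x`: `u` is harmonic in the fluid, with vanishing normal derivative on the
lateral walls and on the bottom. -/
structure IsTankFlow (L₁ L₂ c : ℝ) (e : ℝ × ℝ → ℝ) (u : (ℝ × ℝ) × ℝ → ℝ) : Prop where
  length_nonneg : 0 ≤ L₁
  width_nonneg : 0 ≤ L₂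
  contDiff_surface : ContDiff ℝ 1 e
  contDiff_potential : ContDiff ℝ 2 u
  bottom_le : ∀ p ∈ Icc 0 L₁ ×ˢ Icc 0 L₂, c ≤ e p
  harmonic : ∀ p ∈ Icc 0 L₁ ×ˢ Icc 0 L₂, ∀ z ∈ Icc c (e p),
    ∂[((1, 0), 0)] (∂[((1, 0), 0)] u) (p, z) + ∂[((0, 1), 0)] (∂[((0, 1), 0)] u) (p, z)
      + ∂[(0, 1)] (∂[(0, 1)] u) (p, z) = 0
  wall₁ : ∀ x₁ ∈ ({0, L₁} : Set ℝ), ∀ x₂ ∈ Icc 0 L₂, ∀ z ∈ Icc c (e (x₁, x₂)),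
    ∂[((1, 0), 0)] u ((x₁, x₂), z) = 0
  wall₂ : ∀ x₂ ∈ ({0, L₂} : Set ℝ), ∀ x₁ ∈ Icc 0 L₁, ∀ z ∈ Icc c (e (x₁, x₂)),
    ∂[((0, 1), 0)] u ((x₁, x₂), z) = 0
  bottom : ∀ p ∈ Icc 0 L₁ ×ˢ Icc 0 L₂, ∂[(0, 1)] u (p, c) = 0

namespace IsTankFlow

theorem green (hu : IsTankFlow L₁ L₂ c e u) (hw : ContDiff ℝ 1 w) :
    tankIntegral L₁ L₂ c e (gradDot w u)
      = rectIntegral L₁ L₂ fun p => w (p, e p) * surfaceFlux e u p := by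
  have hu2 := hu.contDiff_potential
  have hw' : Differentiable ℝ w := hw.differentiable one_ne_zero
  have hu' (v : (ℝ × ℝ) × ℝ) : Differentiable ℝ (∂[v] u) :=
    (contDiff_dirDeriv hu2).differentiable one_ne_zero
  have hdiv := tankIntegral_divergence (L₁ := L₁) (L₂ := L₂) (c := c) hu.contDiff_surface
    (A := fun q => w q * ∂[((1, 0), 0)] u q) (B := fun q => w q * ∂[((0, 1), 0)] u q)
    (C := fun q => w q * ∂[(0, 1)] u q) (by fun_prop) (by fun_prop) (by fun_prop)
  have hwall₁ : ∀ a ∈ ({0, L₁} : Set ℝ),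
      wallIntegral₁ L₂ c e (fun q => w q * ∂[((1, 0), 0)] u q) a = 0 := fun a ha => by
    have hmem : a ∈ Icc 0 L₁ := by rcases ha with rfl | rfl <;> simp [hu.length_nonneg]
    rw [wallIntegral₁_congr (G := 0) hu.width_nonneg (fun x₂ hx₂ => hu.bottom_le _ ⟨hmem, hx₂⟩)
      fun x₂ hx₂ z hz => by simp [hu.wall₁ a ha x₂ hx₂ z hz]]
    simp [wallIntegral₁]
  have hwall₂ : ∀ a ∈ ({0, L₂} : Set ℝ),
      wallIntegral₂ L₁ c e (fun q => w q * ∂[((0, 1), 0)] u q) a = 0 := fun a ha => by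
    have hmem : a ∈ Icc 0 L₂ := by rcases ha with rfl | rfl <;> simp [hu.width_nonneg]
    rw [wallIntegral₂_congr (G := 0) hu.length_nonneg (fun x₁ hx₁ => hu.bottom_le _ ⟨hx₁, hmem⟩)
      fun x₁ hx₁ z hz => by simp [hu.wall₂ a ha x₁ hx₁ z hz]]
    simp [wallIntegral₂]
  have hbottom : rectIntegral L₁ L₂ (fun p => w (p, c) * ∂[(0, 1)] u (p, c)) = 0 := by
    rw [rectIntegral_congr (g := 0) hu.length_nonneg hu.width_nonneg fun p hp => by
      simp [hu.bottom p hp]]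
    simp [rectIntegral]
  simp only [hbottom, hwall₁ _ (mem_insert _ _), hwall₂ _ (mem_insert _ _),
    hwall₁ L₁ (by simp), hwall₂ L₂ (by simp), sub_zero, add_zero] at hdiv
  calc tankIntegral L₁ L₂ c e (gradDot w u) = _ := ?_
    _ = _ := hdiv
    _ = _ := congrArg (rectIntegral L₁ L₂) (funext fun p => by rw [surfaceFlux]; ring)
  refine tankIntegral_congr hu.length_nonneg hu.width_nonneg hu.bottom_le fun p hp z hz => ?_
  simp (disch := fun_prop) only [gradDot, dirDeriv_mul]
  linear_combination -w (p, z) * hu.harmonic p hp z hz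

/-- The Green identity for the weight `X · ∇u`, whose gradient produces `½ ∇|∇u|² · X`, combined
with the divergence theorem for `½ |∇u|² X`. -/
theorem rellich (hu : IsTankFlow L₁ L₂ c e u) {X₁ X₂ X₃ : (ℝ × ℝ) × ℝ → ℝ}
    (hX₁ : ContDiff ℝ 1 X₁) (hX₂ : ContDiff ℝ 1 X₂) (hX₃ : ContDiff ℝ 1 X₃) :
    tankIntegral L₁ L₂ c e (fun q =>
        gradDot X₁ u q * ∂[((1, 0), 0)] u q + gradDot X₂ u q * ∂[((0, 1), 0)] u q
          + gradDot X₃ u q * ∂[(0, 1)] u q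
          - 1 / 2 * gradDot u u q
            * (∂[((1, 0), 0)] X₁ q + ∂[((0, 1), 0)] X₂ q + ∂[(0, 1)] X₃ q))
      = rectIntegral L₁ L₂ (fun p =>
          (X₁ (p, e p) * ∂[((1, 0), 0)] u (p, e p) + X₂ (p, e p) * ∂[((0, 1), 0)] u (p, e p)
              + X₃ (p, e p) * ∂[(0, 1)] u (p, e p)) * surfaceFlux e u p
            - 1 / 2 * gradDot u u (p, e p) * (X₃ (p, e p)
              - (X₁ (p, e p) * ∂[(1, 0)] e p + X₂ (p, e p) * ∂[(0, 1)] e p)))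
        + 1 / 2 * rectIntegral L₁ L₂ (fun p => gradDot u u (p, c) * X₃ (p, c))
        - 1 / 2 * (wallIntegral₁ L₂ c e (fun q => gradDot u u q * X₁ q) L₁
          - wallIntegral₁ L₂ c e (fun q => gradDot u u q * X₁ q) 0)
        - 1 / 2 * (wallIntegral₂ L₁ c e (fun q => gradDot u u q * X₂ q) L₂
          - wallIntegral₂ L₁ c e (fun q => gradDot u u q * X₂ q) 0) := by
  have he := hu.contDiff_surface
  have hu2 := hu.contDiff_potential
  have hu1 : ContDiff ℝ 1 u := hu2.of_le one_le_two
  have hK := contDiff_gradDot hu2 hu2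
  have hgreen := hu.green (w := fun q => X₁ q * ∂[((1, 0), 0)] u q + X₂ q * ∂[((0, 1), 0)] u q
    + X₃ q * ∂[(0, 1)] u q) (by fun_prop)
  have hdiv := tankIntegral_divergence (L₁ := L₁) (L₂ := L₂) (c := c) he
    (hK.mul hX₁) (hK.mul hX₂) (hK.mul hX₃)
  rw [funext (gradDot_inner_grad hu2 (hX₁.differentiable one_ne_zero)
    (hX₂.differentiable one_ne_zero) (hX₃.differentiable one_ne_zero)),
    tankIntegral_add he.continuous (by fun_prop) (by fun_prop), tankIntegral_const_mul, hdiv]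
    at hgreen
  rw [rectIntegral_sub (by fun_prop) (by fun_prop)]
  have htop : rectIntegral L₁ L₂ (fun p => 1 / 2 * gradDot u u (p, e p) * (X₃ (p, e p)
        - (X₁ (p, e p) * ∂[(1, 0)] e p + X₂ (p, e p) * ∂[(0, 1)] e p)))
      = 1 / 2 * rectIntegral L₁ L₂ (fun p => gradDot u u (p, e p) * X₃ (p, e p)
          - gradDot u u (p, e p) * X₁ (p, e p) * ∂[(1, 0)] e p
          - gradDot u u (p, e p) * X₂ (p, e p) * ∂[(0, 1)] e p) := by
    rw [← rectIntegral_const_mul]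
    congr 1 with p
    ring
  rw [htop]
  linear_combination hgreen

theorem rellich_dilation (hu : IsTankFlow L₁ L₂ c e u) :
    -(1 / 2) * tankIntegral L₁ L₂ c e (gradDot u u)
      = rectIntegral L₁ L₂ (fun p =>
          (p.1 * ∂[((1, 0), 0)] u (p, e p) + p.2 * ∂[((0, 1), 0)] u (p, e p)
              + e p * ∂[(0, 1)] u (p, e p)) * surfaceFlux e u p
            - 1 / 2 * gradDot u u (p, e p)
              * (e p - (p.1 * ∂[(1, 0)] e p + p.2 * ∂[(0, 1)] e p)))
        + c / 2 * rectIntegral L₁ L₂ (fun p => gradDot u u (p, c))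
        - 1 / 2 * (L₁ * wallIntegral₁ L₂ c e (gradDot u u) L₁
          + L₂ * wallIntegral₂ L₁ c e (gradDot u u) L₂) := by
  have hwall₁ (a : ℝ) : wallIntegral₁ L₂ c e (fun q => gradDot u u q * q.1.1) a
      = a * wallIntegral₁ L₂ c e (gradDot u u) a := by
    simp [wallIntegral₁, mul_comm]
  have hwall₂ (a : ℝ) : wallIntegral₂ L₁ c e (fun q => gradDot u u q * q.1.2) a
      = a * wallIntegral₂ L₁ c e (gradDot u u) a := by
    simp [wallIntegral₂, mul_comm]
  have hbottom : rectIntegral L₁ L₂ (fun p => gradDot u u (p, c) * c)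
      = c * rectIntegral L₁ L₂ (fun p => gradDot u u (p, c)) := by
    simp [rectIntegral, mul_comm]
  have h := hu.rellich (X₁ := fun q => q.1.1) (X₂ := fun q => q.1.2) (X₃ := fun q => q.2)
    (by fun_prop) (by fun_prop) (by fun_prop)
  rw [hwall₁, hwall₁, hwall₂, hwall₂, hbottom] at h
  calc -(1 / 2) * tankIntegral L₁ L₂ c e (gradDot u u) = _ := ?_
    _ = _ := h
    _ = _ := by ring
  rw [← tankIntegral_const_mul]
  congr 1 with q
  simp (disch := fun_prop) only [gradDot, dirDeriv_fst, dirDeriv_snd, dirDeriv_id,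
    Prod.fst_zero, Prod.snd_zero]
  ring

theorem rellich_vertical (hu : IsTankFlow L₁ L₂ c e u) :
    tankIntegral L₁ L₂ c e (fun q => ∂[(0, 1)] u q
        * (∂[(1, 0)] e q.1 * ∂[((1, 0), 0)] u q + ∂[(0, 1)] e q.1 * ∂[((0, 1), 0)] u q))
      = rectIntegral L₁ L₂ (fun p => e p * (∂[(0, 1)] u (p, e p) * surfaceFlux e u p
          - 1 / 2 * gradDot u u (p, e p)))
        + 1 / 2 * rectIntegral L₁ L₂ (fun p => e p * gradDot u u (p, c)) := by
  have he := hu.contDiff_surface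
  have hsurface : Differentiable ℝ e := he.differentiable one_ne_zero
  have h := hu.rellich (X₁ := fun _ => 0) (X₂ := fun _ => 0) (X₃ := fun q => e q.1)
    (by fun_prop) (by fun_prop) (by fun_prop)
  have hX₃ (v : (ℝ × ℝ) × ℝ) (q : (ℝ × ℝ) × ℝ) : ∂[v] (fun q => e q.1) q = ∂[v.1] e q.1 :=
    dirDeriv_comp (hsurface _) hasFDerivAt_fst v
  have hvert : ∂[(0 : ℝ × ℝ)] e = 0 := by ext; simp [dirDeriv]
  calc _ = _ := ?_
    _ = _ := h
    _ = _ := ?_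
  · congr 1 with q
    simp only [gradDot, dirDeriv_const, hX₃, hvert, Pi.zero_apply]
    ring
  · simp [wallIntegral₁, wallIntegral₂, mul_sub, mul_comm, mul_left_comm]

end IsTankFlow

end PotentialFlow

section WaterWave

/-- The function of the horizontal position `p` obtained from `η` at time `t`. -/
def surfaceSlice (η : ℝ × ℝ × ℝ → ℝ) (t : ℝ) (p : ℝ × ℝ) : ℝ := η (t, p)

/-- The function of the spatial position `q` obtained from `F` at time `t`. Space-time points are
written `((t, x), z)`, so that the moving surface is the graph of a function of `(t, x)`. -/
def fluidSlice (F : (ℝ × ℝ × ℝ) × ℝ → ℝ) (t : ℝ) (q : (ℝ × ℝ) × ℝ) : ℝ := F ((t, q.1), q.2)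

/-- The trace `ψ(t, x) = ϕ(t, x, η(t, x))` of the potential on the surface. -/
def surfaceTrace (η : ℝ × ℝ × ℝ → ℝ) (ϕ : (ℝ × ℝ × ℝ) × ℝ → ℝ) (τ : ℝ × ℝ × ℝ) : ℝ := ϕ (τ, η τ)

/-- The inner product of the spatial gradients of two space-time functions. -/
def spaceGradDot (ϕ χ : (ℝ × ℝ × ℝ) × ℝ → ℝ) (q : (ℝ × ℝ × ℝ) × ℝ) : ℝ :=
  ∂[((0, 1, 0), 0)] ϕ q * ∂[((0, 1, 0), 0)] χ q + ∂[((0, 0, 1), 0)] ϕ q * ∂[((0, 0, 1), 0)] χ q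
    + ∂[(0, 1)] ϕ q * ∂[(0, 1)] χ q

variable {L₁ L₂ h g T t : ℝ} {η : ℝ × ℝ × ℝ → ℝ} {ϕ χ F : (ℝ × ℝ × ℝ) × ℝ → ℝ}

theorem contDiff_fluidSlice {n : WithTop ℕ∞} (hF : ContDiff ℝ n F) (t : ℝ) :
    ContDiff ℝ n (fluidSlice F t) := by
  unfold fluidSlice
  fun_prop

theorem dirDeriv_surfaceSlice (hη : Differentiable ℝ η) (t : ℝ) (v p : ℝ × ℝ) :
    ∂[v] (surfaceSlice η t) p = ∂[(0, v)] η (t, p) :=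
  dirDeriv_comp (hη _) (hasFDerivAt_prodMk_right t p) v

theorem dirDeriv_fluidSlice (hF : Differentiable ℝ F) (t : ℝ) (v q : (ℝ × ℝ) × ℝ) :
    ∂[v] (fluidSlice F t) q = ∂[((0, v.1), v.2)] F ((t, q.1), q.2) := by
  have hslice : HasFDerivAt (fun q : (ℝ × ℝ) × ℝ => ((t, q.1), q.2))
      (((0 : _ →L[ℝ] ℝ).prod (.fst ℝ _ _)).prod (.snd ℝ _ _)) q :=
    ((hasFDerivAt_const t q).prodMk hasFDerivAt_fst).prodMk hasFDerivAt_snd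
  exact dirDeriv_comp (hF _) hslice v

theorem gradDot_fluidSlice (hϕ : Differentiable ℝ ϕ) (hχ : Differentiable ℝ χ) (t : ℝ) :
    gradDot (fluidSlice ϕ t) (fluidSlice χ t) = fluidSlice (spaceGradDot ϕ χ) t := by
  ext q
  simp only [gradDot, dirDeriv_fluidSlice hϕ, dirDeriv_fluidSlice hχ]
  rfl

@[fun_prop]
theorem contDiff_spaceGradDot (hϕ : ContDiff ℝ 2 ϕ) (hχ : ContDiff ℝ 2 χ) :
    ContDiff ℝ 1 (spaceGradDot ϕ χ) := by
  unfold spaceGradDot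
  fun_prop

@[fun_prop]
theorem contDiff_surfaceTrace {n : WithTop ℕ∞} (hη : ContDiff ℝ n η) (hϕ : ContDiff ℝ n ϕ) :
    ContDiff ℝ n (surfaceTrace η ϕ) := by
  unfold surfaceTrace
  fun_prop

theorem dirDeriv_time_spaceGradDot (hϕ : ContDiff ℝ 2 ϕ) :
    ∂[((1, 0), 0)] (spaceGradDot ϕ ϕ) = fun q => 2 * spaceGradDot (∂[((1, 0), 0)] ϕ) ϕ q := by
  have hϕ' (v : (ℝ × ℝ × ℝ) × ℝ) : Differentiable ℝ (∂[v] ϕ) :=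
    (contDiff_dirDeriv hϕ).differentiable one_ne_zero
  funext q
  unfold spaceGradDot
  simp (disch := fun_prop) only [dirDeriv_add, dirDeriv_mul, dirDeriv_comm hϕ ((1, 0), 0)]
  ring

theorem hasDerivAt_tankIntegral {c : ℝ} (hη : ContDiff ℝ 1 η) (hF : ContDiff ℝ 1 F) (t : ℝ) :
    HasDerivAt (fun t => tankIntegral L₁ L₂ c (surfaceSlice η t) (fluidSlice F t))
      (tankIntegral L₁ L₂ c (surfaceSlice η t) (fluidSlice (∂[((1, 0), 0)] F) t)
        + rectIntegral L₁ L₂ fun p => F ((t, p), η (t, p)) * ∂[(1, 0)] η (t, p)) t := by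
  refine (hasDerivAt_rectIntegral (contDiff_integral hF hη c) t).congr_deriv ?_
  simp only [dirDeriv_integral hF (hη.differentiable one_ne_zero _)]
  exact rectIntegral_add (by fun_prop) (by fun_prop)

/-- A `C²` solution of the water-wave system on `[0, T]` in the tank of depth `h` over
`[0, L₁] × [0, L₂]`, with surface elevation `η` and potential `ϕ`. Both are functions on the whole
space-time, so that all derivatives up to the boundary of the fluid are two-sided. -/
structure IsWaterWave (L₁ L₂ h g T : ℝ) (η : ℝ × ℝ × ℝ → ℝ) (ϕ : (ℝ × ℝ × ℝ) × ℝ → ℝ) : Prop where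
  contDiff_surface : ContDiff ℝ 2 η
  contDiff_potential : ContDiff ℝ 2 ϕ
  isTankFlow : ∀ t ∈ Icc 0 T, IsTankFlow L₁ L₂ (-h) (surfaceSlice η t) (fluidSlice ϕ t)
  kinematic : ∀ t ∈ Icc 0 T, ∀ p ∈ Icc 0 L₁ ×ˢ Icc 0 L₂,
    ∂[(1, 0)] η (t, p) = surfaceFlux (surfaceSlice η t) (fluidSlice ϕ t) p
  bernoulli : ∀ t ∈ Icc 0 T, ∀ p ∈ Icc 0 L₁ ×ˢ Icc 0 L₂,
    ∂[((1, 0), 0)] ϕ ((t, p), η (t, p)) + 1 / 2 * spaceGradDot ϕ ϕ ((t, p), η (t, p))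
      + g * η (t, p) = 0

/-- Twice the kinetic energy of the fluid. -/
def dirichletEnergy (L₁ L₂ h : ℝ) (η : ℝ × ℝ × ℝ → ℝ) (ϕ : (ℝ × ℝ × ℝ) × ℝ → ℝ) (t : ℝ) : ℝ :=
  tankIntegral L₁ L₂ (-h) (surfaceSlice η t) (fluidSlice (spaceGradDot ϕ ϕ) t)

/-- The energy `𝓗(t)`. -/
def waveEnergy (L₁ L₂ h g : ℝ) (η : ℝ × ℝ × ℝ → ℝ) (ϕ : (ℝ × ℝ × ℝ) × ℝ → ℝ) (t : ℝ) : ℝ :=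
  g / 2 * rectIntegral L₁ L₂ (fun p => η (t, p) ^ 2) + 1 / 2 * dirichletEnergy L₁ L₂ h η ϕ t

/-- The density `Θ = -η ∂ₜψ - (g/2) η²` observed on the contact lines. -/
def observedDensity (g : ℝ) (η : ℝ × ℝ × ℝ → ℝ) (ϕ : (ℝ × ℝ × ℝ) × ℝ → ℝ) (τ : ℝ × ℝ × ℝ) : ℝ :=
  -(η τ * ∂[(1, 0)] (surfaceTrace η ϕ) τ + g / 2 * η τ ^ 2)

/-- The time density of the boundary observation `𝓑(T)`. -/
def observation (L₁ L₂ g : ℝ) (η : ℝ × ℝ × ℝ → ℝ) (ϕ : (ℝ × ℝ × ℝ) × ℝ → ℝ) (t : ℝ) : ℝ :=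
  L₁ * (∫ x₂ in (0 : ℝ)..L₂, observedDensity g η ϕ (t, L₁, x₂))
    + L₂ * ∫ x₁ in (0 : ℝ)..L₁, observedDensity g η ϕ (t, x₁, L₂)

/-- The time density of twice the term `P`. -/
def wettedEnergy (L₁ L₂ h : ℝ) (η : ℝ × ℝ × ℝ → ℝ) (ϕ : (ℝ × ℝ × ℝ) × ℝ → ℝ) (t : ℝ) : ℝ :=
  L₁ * wallIntegral₁ L₂ (-h) (surfaceSlice η t) (fluidSlice (spaceGradDot ϕ ϕ) t) L₁
    + L₂ * wallIntegral₂ L₁ (-h) (surfaceSlice η t) (fluidSlice (spaceGradDot ϕ ϕ) t) L₂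
    + h * rectIntegral L₁ L₂ fun p => spaceGradDot ϕ ϕ ((t, p), -h)

/-- The time density of the integral in `I₁`. -/
def bottomTerm (L₁ L₂ h : ℝ) (η : ℝ × ℝ × ℝ → ℝ) (ϕ : (ℝ × ℝ × ℝ) × ℝ → ℝ) (t : ℝ) : ℝ :=
  rectIntegral L₁ L₂ fun p => η (t, p)
    * (∂[((0, 1, 0), 0)] ϕ ((t, p), -h) ^ 2 + ∂[((0, 0, 1), 0)] ϕ ((t, p), -h) ^ 2)

/-- The time density of the integral in `I₂`. -/
def slopeTerm (L₁ L₂ h : ℝ) (η : ℝ × ℝ × ℝ → ℝ) (ϕ : (ℝ × ℝ × ℝ) × ℝ → ℝ) (t : ℝ) : ℝ :=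
  tankIntegral L₁ L₂ (-h) (surfaceSlice η t) <| fluidSlice (fun q => ∂[(0, 1)] ϕ q
    * (∂[(0, 1, 0)] η q.1 * ∂[((0, 1, 0), 0)] ϕ q + ∂[(0, 0, 1)] η q.1 * ∂[((0, 0, 1), 0)] ϕ q)) t

/-- The moment `∬ η ψ` of the first bracket in `I₃`. -/
def surfaceMoment (L₁ L₂ : ℝ) (η : ℝ × ℝ × ℝ → ℝ) (ϕ : (ℝ × ℝ × ℝ) × ℝ → ℝ) (t : ℝ) : ℝ :=
  rectIntegral L₁ L₂ fun p => η (t, p) * surfaceTrace η ϕ (t, p)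

/-- The moment `∬ η (x · ∇ψ)` of the second bracket in `I₃`. -/
def dilationMoment (L₁ L₂ : ℝ) (η : ℝ × ℝ × ℝ → ℝ) (ϕ : (ℝ × ℝ × ℝ) × ℝ → ℝ) (t : ℝ) : ℝ :=
  rectIntegral L₁ L₂ fun p => η (t, p) * (p.1 * ∂[(0, 1, 0)] (surfaceTrace η ϕ) (t, p)
    + p.2 * ∂[(0, 0, 1)] (surfaceTrace η ϕ) (t, p))

@[fun_prop]
theorem contDiff_observedDensity (hη : ContDiff ℝ 2 η) (hϕ : ContDiff ℝ 2 ϕ) :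
    ContDiff ℝ 1 (observedDensity g η ϕ) := by
  unfold observedDensity
  fun_prop (disch := norm_num)

theorem continuous_observation (hη : ContDiff ℝ 2 η) (hϕ : ContDiff ℝ 2 ϕ) :
    Continuous (observation L₁ L₂ g η ϕ) := by
  unfold observation
  fun_prop

theorem continuous_wettedEnergy (hη : Continuous η) (hϕ : ContDiff ℝ 2 ϕ) :
    Continuous (wettedEnergy L₁ L₂ h η ϕ) := by
  unfold wettedEnergy wallIntegral₁ wallIntegral₂ rectIntegral surfaceSlice fluidSlice
  fun_prop

theorem continuous_bottomTerm (hη : Continuous η) (hϕ : ContDiff ℝ 1 ϕ) :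
    Continuous (bottomTerm L₁ L₂ h η ϕ) := by
  unfold bottomTerm rectIntegral
  fun_prop

theorem continuous_slopeTerm (hη : ContDiff ℝ 1 η) (hϕ : ContDiff ℝ 1 ϕ) :
    Continuous (slopeTerm L₁ L₂ h η ϕ) := by
  unfold slopeTerm tankIntegral rectIntegral surfaceSlice fluidSlice
  fun_prop

namespace IsWaterWave

theorem surfaceTrace_bernoulli (hw : IsWaterWave L₁ L₂ h g T η ϕ) (ht : t ∈ Icc 0 T) {p : ℝ × ℝ}
    (hp : p ∈ Icc 0 L₁ ×ˢ Icc 0 L₂) :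
    ∂[(1, 0)] (surfaceTrace η ϕ) (t, p) + g * η (t, p)
      = ∂[(0, 1)] ϕ ((t, p), η (t, p)) * ∂[(1, 0)] η (t, p)
        - 1 / 2 * spaceGradDot ϕ ϕ ((t, p), η (t, p)) := by
  have htrace := dirDeriv_comp_graph (hw.contDiff_potential.differentiable two_ne_zero _)
    (hw.contDiff_surface.differentiable two_ne_zero (t, p)) (1, 0)
  unfold surfaceTrace
  linear_combination htrace + hw.bernoulli t ht p hp

theorem green (hw : IsWaterWave L₁ L₂ h g T η ϕ) (ht : t ∈ Icc 0 T) (hχ : ContDiff ℝ 1 χ) :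
    tankIntegral L₁ L₂ (-h) (surfaceSlice η t) (fluidSlice (spaceGradDot χ ϕ) t)
      = rectIntegral L₁ L₂ fun p => χ ((t, p), η (t, p)) * ∂[(1, 0)] η (t, p) := by
  have hflow := hw.isTankFlow t ht
  rw [← gradDot_fluidSlice (hχ.differentiable one_ne_zero)
    (hw.contDiff_potential.differentiable two_ne_zero), hflow.green (contDiff_fluidSlice hχ t)]
  refine rectIntegral_congr hflow.length_nonneg hflow.width_nonneg fun p hp => ?_
  rw [hw.kinematic t ht p hp]
  rfl

theorem hasDerivAt_waveEnergy (hw : IsWaterWave L₁ L₂ h g T η ϕ) (ht : t ∈ Icc 0 T) :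
    HasDerivAt (waveEnergy L₁ L₂ h g η ϕ) 0 t := by
  have hη : ContDiff ℝ 1 η := hw.contDiff_surface.of_le one_le_two
  have hϕ := hw.contDiff_potential
  have hη' : Differentiable ℝ η := hη.differentiable one_ne_zero
  have hflow := hw.isTankFlow t ht
  have hpotential := hasDerivAt_rectIntegral (L₁ := L₁) (L₂ := L₂) (hη.pow 2) t
  have hkinetic := hasDerivAt_tankIntegral (L₁ := L₁) (L₂ := L₂) (c := -h) hη
    (contDiff_spaceGradDot hϕ hϕ) t
  refine ((hpotential.const_mul (g / 2)).add (hkinetic.const_mul (1 / 2))).congr_deriv ?_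
  rw [dirDeriv_time_spaceGradDot hϕ]
  have hgreen : tankIntegral L₁ L₂ (-h) (surfaceSlice η t)
        (fluidSlice (fun q => 2 * spaceGradDot (∂[((1, 0), 0)] ϕ) ϕ q) t)
      = 2 * rectIntegral L₁ L₂ (fun p =>
          ∂[((1, 0), 0)] ϕ ((t, p), η (t, p)) * ∂[(1, 0)] η (t, p)) :=
    (tankIntegral_const_mul 2 _).trans (by rw [← hw.green ht (contDiff_dirDeriv hϕ)]; rfl)
  have hdensity : rectIntegral L₁ L₂ (fun p => g / 2 * ∂[(1, 0)] (fun τ => η τ ^ 2) (t, p)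
      + 1 / 2 * (2 * (∂[((1, 0), 0)] ϕ ((t, p), η (t, p)) * ∂[(1, 0)] η (t, p))
        + spaceGradDot ϕ ϕ ((t, p), η (t, p)) * ∂[(1, 0)] η (t, p))) = 0 := by
    rw [rectIntegral_congr (g := 0) hflow.length_nonneg hflow.width_nonneg fun p hp => ?_]
    · simp [rectIntegral]
    · simp (disch := fun_prop) only [pow_two, dirDeriv_mul, Pi.zero_apply]
      linear_combination ∂[(1, 0)] η (t, p) * hw.bernoulli t ht p hp
  rw [rectIntegral_add (by fun_prop) (by fun_prop), rectIntegral_const_mul, rectIntegral_const_mul,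
    rectIntegral_add (by fun_prop) (by fun_prop), rectIntegral_const_mul] at hdensity
  rw [hgreen]
  exact hdensity

theorem waveEnergy_eq (hw : IsWaterWave L₁ L₂ h g T η ϕ) (ht : t ∈ Icc 0 T) :
    waveEnergy L₁ L₂ h g η ϕ t = waveEnergy L₁ L₂ h g η ϕ 0 :=
  constant_of_has_deriv_right_zero
    (fun _ hs => (hw.hasDerivAt_waveEnergy hs).continuousAt.continuousWithinAt)
    (fun _ hs => (hw.hasDerivAt_waveEnergy (Ico_subset_Icc_self hs)).hasDerivWithinAt) t ht

theorem hasDerivAt_surfaceMoment (hw : IsWaterWave L₁ L₂ h g T η ϕ) (ht : t ∈ Icc 0 T) :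
    HasDerivAt (surfaceMoment L₁ L₂ η ϕ)
      (dirichletEnergy L₁ L₂ h η ϕ t
        + rectIntegral L₁ L₂ fun p => η (t, p) * ∂[(1, 0)] (surfaceTrace η ϕ) (t, p)) t := by
  have hη : ContDiff ℝ 1 η := hw.contDiff_surface.of_le one_le_two
  have hϕ : ContDiff ℝ 1 ϕ := hw.contDiff_potential.of_le one_le_two
  have hη' : Differentiable ℝ η := hη.differentiable one_ne_zero
  have hψ' : Differentiable ℝ (surfaceTrace η ϕ) :=
    (contDiff_surfaceTrace hη hϕ).differentiable one_ne_zero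
  refine (hasDerivAt_rectIntegral (hη.mul (contDiff_surfaceTrace hη hϕ)) t).congr_deriv ?_
  rw [dirichletEnergy, hw.green ht hϕ, ← rectIntegral_add (by fun_prop) (by fun_prop)]
  congr 1 with p
  simp (disch := fun_prop) only [dirDeriv_mul]
  unfold surfaceTrace
  ring

theorem bottomTerm_eq (hw : IsWaterWave L₁ L₂ h g T η ϕ) (ht : t ∈ Icc 0 T) :
    bottomTerm L₁ L₂ h η ϕ t
      = rectIntegral L₁ L₂ fun p => η (t, p) * spaceGradDot ϕ ϕ ((t, p), -h) := by
  have hflow := hw.isTankFlow t ht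
  refine rectIntegral_congr hflow.length_nonneg hflow.width_nonneg fun p hp => ?_
  have hϕ' : Differentiable ℝ ϕ := hw.contDiff_potential.differentiable two_ne_zero
  have hnormal : ∂[(0, 1)] ϕ ((t, p), -h) = 0 :=
    (dirDeriv_fluidSlice hϕ' t (0, 1) (p, -h)).symm.trans (hflow.bottom p hp)
  rw [spaceGradDot, hnormal]
  ring

theorem slopeTerm_eq (hw : IsWaterWave L₁ L₂ h g T η ϕ) (ht : t ∈ Icc 0 T) :
    slopeTerm L₁ L₂ h η ϕ t
      = rectIntegral L₁ L₂ (fun p => η (t, p) * ∂[(1, 0)] (surfaceTrace η ϕ) (t, p))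
        + g * rectIntegral L₁ L₂ (fun p => η (t, p) ^ 2) + 1 / 2 * bottomTerm L₁ L₂ h η ϕ t := by
  have hη := hw.contDiff_surface
  have hϕ := hw.contDiff_potential
  have hη' : Differentiable ℝ η := hη.differentiable two_ne_zero
  have hϕ' : Differentiable ℝ ϕ := hϕ.differentiable two_ne_zero
  have hflow := hw.isTankFlow t ht
  have htop : rectIntegral L₁ L₂ (fun p => surfaceSlice η t p
        * (∂[(0, 1)] (fluidSlice ϕ t) (p, surfaceSlice η t p)
            * surfaceFlux (surfaceSlice η t) (fluidSlice ϕ t) p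
          - 1 / 2 * fluidSlice (spaceGradDot ϕ ϕ) t (p, surfaceSlice η t p)))
      = rectIntegral L₁ L₂ (fun p => η (t, p) * ∂[(1, 0)] (surfaceTrace η ϕ) (t, p)
        + g * η (t, p) ^ 2) := by
    refine rectIntegral_congr hflow.length_nonneg hflow.width_nonneg fun p hp => ?_
    rw [← hw.kinematic t ht p hp, dirDeriv_fluidSlice hϕ']
    simp only [surfaceSlice, fluidSlice]
    linear_combination -η (t, p) * hw.surfaceTrace_bernoulli ht hp
  have hflux := hflow.rellich_vertical
  rw [gradDot_fluidSlice hϕ' hϕ', htop, rectIntegral_add (by fun_prop) (by fun_prop),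
    rectIntegral_const_mul] at hflux
  rw [hw.bottomTerm_eq ht]
  refine Eq.trans ?_ hflux
  simp only [slopeTerm, dirDeriv_surfaceSlice hη', dirDeriv_fluidSlice hϕ']
  rfl

theorem rellich_dilation (hw : IsWaterWave L₁ L₂ h g T η ϕ) (ht : t ∈ Icc 0 T) :
    -(1 / 2) * dirichletEnergy L₁ L₂ h η ϕ t
      = rectIntegral L₁ L₂ (fun p =>
          (p.1 * ∂[((0, 1, 0), 0)] ϕ ((t, p), η (t, p))
              + p.2 * ∂[((0, 0, 1), 0)] ϕ ((t, p), η (t, p))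
              + η (t, p) * ∂[(0, 1)] ϕ ((t, p), η (t, p))) * ∂[(1, 0)] η (t, p)
            - 1 / 2 * spaceGradDot ϕ ϕ ((t, p), η (t, p))
              * (η (t, p) - (p.1 * ∂[(0, 1, 0)] η (t, p) + p.2 * ∂[(0, 0, 1)] η (t, p))))
        - 1 / 2 * wettedEnergy L₁ L₂ h η ϕ t := by
  have hη' : Differentiable ℝ η := hw.contDiff_surface.differentiable two_ne_zero
  have hϕ' : Differentiable ℝ ϕ := hw.contDiff_potential.differentiable two_ne_zero
  have hflow := hw.isTankFlow t ht
  have hrellich := hflow.rellich_dilation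
  rw [rectIntegral_congr hflow.length_nonneg hflow.width_nonneg fun p hp => by
    rw [← hw.kinematic t ht p hp], gradDot_fluidSlice hϕ' hϕ'] at hrellich
  simp only [dirDeriv_surfaceSlice hη', dirDeriv_fluidSlice hϕ'] at hrellich
  rw [dirichletEnergy, hrellich, wettedEnergy]
  simp only [surfaceSlice, fluidSlice, Prod.mk_zero_zero]
  ring

/-- Both sides contain `∂ₜη (x · ∇ψ) - (x · ∇η) (∂ₜψ + g η)`: on the right it comes from the chain
rule for `ψ` and from the Bernoulli equation. -/
theorem dilationMoment_density (hw : IsWaterWave L₁ L₂ h g T η ϕ) (ht : t ∈ Icc 0 T) {p : ℝ × ℝ}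
    (hp : p ∈ Icc 0 L₁ ×ˢ Icc 0 L₂) :
    ∂[(1, 0)] (fun τ => η τ * (τ.2.1 * ∂[(0, 1, 0)] (surfaceTrace η ϕ) τ
          + τ.2.2 * ∂[(0, 0, 1)] (surfaceTrace η ϕ) τ)) (t, p)
        + (2 * observedDensity g η ϕ (t, p) + (p.1 * ∂[(0, 1, 0)] (observedDensity g η ϕ) (t, p)
          + p.2 * ∂[(0, 0, 1)] (observedDensity g η ϕ) (t, p)))
      = (p.1 * ∂[((0, 1, 0), 0)] ϕ ((t, p), η (t, p))
            + p.2 * ∂[((0, 0, 1), 0)] ϕ ((t, p), η (t, p))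
            + η (t, p) * ∂[(0, 1)] ϕ ((t, p), η (t, p))) * ∂[(1, 0)] η (t, p)
          - 1 / 2 * spaceGradDot ϕ ϕ ((t, p), η (t, p))
            * (η (t, p) - (p.1 * ∂[(0, 1, 0)] η (t, p) + p.2 * ∂[(0, 0, 1)] η (t, p)))
          - 3 * (η (t, p) * ∂[(1, 0)] (surfaceTrace η ϕ) (t, p)) - 2 * g * η (t, p) ^ 2 := by
  have hη := hw.contDiff_surface
  have hϕ := hw.contDiff_potential
  have hψ := contDiff_surfaceTrace hη hϕ
  have hη' : Differentiable ℝ η := hη.differentiable two_ne_zero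
  have hϕ' : Differentiable ℝ ϕ := hϕ.differentiable two_ne_zero
  have hψ' (v : ℝ × ℝ × ℝ) : Differentiable ℝ (∂[v] (surfaceTrace η ϕ)) :=
    (contDiff_dirDeriv hψ).differentiable one_ne_zero
  have hchain (v : ℝ × ℝ × ℝ) : ∂[v] (surfaceTrace η ϕ) (t, p)
      = ∂[(v, 0)] ϕ ((t, p), η (t, p)) + ∂[(0, 1)] ϕ ((t, p), η (t, p)) * ∂[v] η (t, p) :=
    dirDeriv_comp_graph (hϕ' _) (hη' _) v
  have hbernoulli := hw.surfaceTrace_bernoulli ht hp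
  unfold observedDensity
  simp (disch := fun_prop) only [pow_two, dirDeriv_neg, dirDeriv_mul, dirDeriv_add,
    dirDeriv_const, dirDeriv_fst, dirDeriv_snd, dirDeriv_id, Prod.fst_zero, Prod.snd_zero,
    dirDeriv_comm hψ (1, 0)]
  have h₁ := hchain (0, 1, 0)
  have h₂ := hchain (0, 0, 1)
  linear_combination (∂[(1, 0)] η (t, p) * p.1) * h₁ + (∂[(1, 0)] η (t, p) * p.2) * h₂
    + (η (t, p) - (p.1 * ∂[(0, 1, 0)] η (t, p) + p.2 * ∂[(0, 0, 1)] η (t, p))) * hbernoulli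

theorem hasDerivAt_dilationMoment (hw : IsWaterWave L₁ L₂ h g T η ϕ) (ht : t ∈ Icc 0 T) :
    HasDerivAt (dilationMoment L₁ L₂ η ϕ)
      (1 / 2 * wettedEnergy L₁ L₂ h η ϕ t - 1 / 2 * dirichletEnergy L₁ L₂ h η ϕ t
        - 3 * rectIntegral L₁ L₂ (fun p => η (t, p) * ∂[(1, 0)] (surfaceTrace η ϕ) (t, p))
        - 2 * g * rectIntegral L₁ L₂ (fun p => η (t, p) ^ 2) - observation L₁ L₂ g η ϕ t) t := by
  have hη := hw.contDiff_surface
  have hϕ := hw.contDiff_potential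
  have hflow := hw.isTankFlow t ht
  have hΘ : ContDiff ℝ 1 (observedDensity g η ϕ) := contDiff_observedDensity hη hϕ
  have hΘ' : Differentiable ℝ (observedDensity g η ϕ) := hΘ.differentiable one_ne_zero
  have hη1 : ContDiff ℝ 1 η := hη.of_le one_le_two
  have hderiv := hasDerivAt_rectIntegral (L₁ := L₁) (L₂ := L₂) (f := fun τ => η τ
      * (τ.2.1 * ∂[(0, 1, 0)] (surfaceTrace η ϕ) τ + τ.2.2 * ∂[(0, 0, 1)] (surfaceTrace η ϕ) τ))
    (by fun_prop) t
  have hobs : _ = observation L₁ L₂ g η ϕ t := rectIntegral_dilation (L₁ := L₁) (L₂ := L₂)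
    (f := surfaceSlice (observedDensity g η ϕ) t) (hΘ.comp (contDiff_prodMk_right t))
  simp only [dirDeriv_surfaceSlice hΘ', surfaceSlice] at hobs
  have hdensity := rectIntegral_congr hflow.length_nonneg hflow.width_nonneg fun p hp =>
    hw.dilationMoment_density ht hp
  rw [rectIntegral_add (by fun_prop) (by fun_prop), rectIntegral_sub (by fun_prop) (by fun_prop),
    rectIntegral_sub (by fun_prop) (by fun_prop), rectIntegral_const_mul, rectIntegral_const_mul]
    at hdensity
  refine hderiv.congr_deriv ?_
  rw [← hobs]
  linear_combination hdensity - hw.rellich_dilation ht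

theorem hasDerivAt_moments (hw : IsWaterWave L₁ L₂ h g T η ϕ) (ht : t ∈ Icc 0 T) :
    HasDerivAt (fun t => 3 / 4 * surfaceMoment L₁ L₂ η ϕ t + dilationMoment L₁ L₂ η ϕ t)
      (1 / 2 * waveEnergy L₁ L₂ h g η ϕ 0 + 1 / 2 * wettedEnergy L₁ L₂ h η ϕ t
        + 9 / 8 * bottomTerm L₁ L₂ h η ϕ t - 9 / 4 * slopeTerm L₁ L₂ h η ϕ t
        - observation L₁ L₂ g η ϕ t) t := by
  refine (((hw.hasDerivAt_surfaceMoment ht).const_mul (3 / 4)).add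
    (hw.hasDerivAt_dilationMoment ht)).congr_deriv ?_
  rw [← hw.waveEnergy_eq ht, waveEnergy, hw.slopeTerm_eq ht]
  ring

theorem integral_observation (hw : IsWaterWave L₁ L₂ h g T η ϕ) (hT : 0 ≤ T) :
    ∫ t in (0 : ℝ)..T, observation L₁ L₂ g η ϕ t
      = T / 2 * waveEnergy L₁ L₂ h g η ϕ 0
        + 1 / 2 * (∫ t in (0 : ℝ)..T, wettedEnergy L₁ L₂ h η ϕ t)
        + 9 / 8 * (∫ t in (0 : ℝ)..T, bottomTerm L₁ L₂ h η ϕ t)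
        + -(9 / 4) * (∫ t in (0 : ℝ)..T, slopeTerm L₁ L₂ h η ϕ t)
        + (-(3 / 4) * (surfaceMoment L₁ L₂ η ϕ T - surfaceMoment L₁ L₂ η ϕ 0)
          - (dilationMoment L₁ L₂ η ϕ T - dilationMoment L₁ L₂ η ϕ 0)) := by
  have hη : ContDiff ℝ 2 η := hw.contDiff_surface
  have hϕ : ContDiff ℝ 2 ϕ := hw.contDiff_potential
  have hη₁ : ContDiff ℝ 1 η := hη.of_le one_le_two
  have hϕ₁ : ContDiff ℝ 1 ϕ := hϕ.of_le one_le_two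
  have hB := continuous_observation (L₁ := L₁) (L₂ := L₂) (g := g) hη hϕ
  have hP := continuous_wettedEnergy (L₁ := L₁) (L₂ := L₂) (h := h) hη.continuous hϕ
  have hI₁ := continuous_bottomTerm (L₁ := L₁) (L₂ := L₂) (h := h) hη.continuous hϕ₁
  have hI₂ := continuous_slopeTerm (L₁ := L₁) (L₂ := L₂) (h := h) hη₁ hϕ₁
  have hFTC := intervalIntegral.integral_eq_sub_of_hasDerivAt
    (fun t ht => hw.hasDerivAt_moments (uIcc_of_le hT ▸ ht))
    (Continuous.intervalIntegrable (by fun_prop) 0 T)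
  rw [intervalIntegral.integral_sub, intervalIntegral.integral_sub, intervalIntegral.integral_add,
    intervalIntegral.integral_add] at hFTC
  · simp only [intervalIntegral.integral_const_mul, intervalIntegral.integral_const,
      smul_eq_mul] at hFTC
    linear_combination -hFTC
  all_goals exact Continuous.intervalIntegrable (by fun_prop) _ _

end IsWaterWave

end WaterWave

section Curried

/-- The elevation `η t x₁ x₂` as a function of the point `(t, (x₁, x₂))`. -/
def uncurrySurface (η : ℝ → ℝ → ℝ → ℝ) (τ : ℝ × ℝ × ℝ) : ℝ := η τ.1 τ.2.1 τ.2.2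

/-- The potential `ϕ t x₁ x₂ y` as a function of the point `((t, (x₁, x₂)), y)`. -/
def uncurryPotential (ϕ : ℝ → ℝ → ℝ → ℝ → ℝ) (q : (ℝ × ℝ × ℝ) × ℝ) : ℝ :=
  ϕ q.1.1 q.1.2.1 q.1.2.2 q.2

variable {η : ℝ → ℝ → ℝ → ℝ} {ϕ : ℝ → ℝ → ℝ → ℝ → ℝ} {L₁ L₂ h g T : ℝ}

theorem uncurrySurface_etaT3 (hη : Differentiable ℝ (uncurrySurface η)) :
    uncurrySurface (etaT3 η) = ∂[(1, 0)] (uncurrySurface η) :=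
  funext fun τ => (hasDerivAt_comp_dirDeriv (f := uncurrySurface η) (hη τ)
    ((hasDerivAt_id' τ.1).prodMk (hasDerivAt_const _ τ.2))).deriv

theorem uncurrySurface_etaX1 (hη : Differentiable ℝ (uncurrySurface η)) :
    uncurrySurface (etaX1 η) = ∂[(0, 1, 0)] (uncurrySurface η) :=
  funext fun τ => (hasDerivAt_comp_dirDeriv (f := uncurrySurface η) (hη τ)
    ((hasDerivAt_const _ τ.1).prodMk
      ((hasDerivAt_id' τ.2.1).prodMk (hasDerivAt_const _ τ.2.2)))).deriv

theorem uncurrySurface_etaX2 (hη : Differentiable ℝ (uncurrySurface η)) :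
    uncurrySurface (etaX2 η) = ∂[(0, 0, 1)] (uncurrySurface η) :=
  funext fun τ => (hasDerivAt_comp_dirDeriv (f := uncurrySurface η) (hη τ)
    ((hasDerivAt_const _ τ.1).prodMk
      ((hasDerivAt_const _ τ.2.1).prodMk (hasDerivAt_id' τ.2.2)))).deriv

theorem uncurryPotential_phiT3 (hϕ : Differentiable ℝ (uncurryPotential ϕ)) :
    uncurryPotential (phiT3 ϕ) = ∂[((1, 0), 0)] (uncurryPotential ϕ) :=
  funext fun q => (hasDerivAt_comp_dirDeriv (f := uncurryPotential ϕ) (hϕ q)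
    (((hasDerivAt_id' q.1.1).prodMk (hasDerivAt_const _ q.1.2)).prodMk
      (hasDerivAt_const _ q.2))).deriv

theorem uncurryPotential_phiX1 (hϕ : Differentiable ℝ (uncurryPotential ϕ)) :
    uncurryPotential (phiX1 ϕ) = ∂[((0, 1, 0), 0)] (uncurryPotential ϕ) :=
  funext fun q => (hasDerivAt_comp_dirDeriv (f := uncurryPotential ϕ) (hϕ q)
    (((hasDerivAt_const _ q.1.1).prodMk
      ((hasDerivAt_id' q.1.2.1).prodMk (hasDerivAt_const _ q.1.2.2))).prodMk
      (hasDerivAt_const _ q.2))).deriv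

theorem uncurryPotential_phiX2 (hϕ : Differentiable ℝ (uncurryPotential ϕ)) :
    uncurryPotential (phiX2 ϕ) = ∂[((0, 0, 1), 0)] (uncurryPotential ϕ) :=
  funext fun q => (hasDerivAt_comp_dirDeriv (f := uncurryPotential ϕ) (hϕ q)
    (((hasDerivAt_const _ q.1.1).prodMk
      ((hasDerivAt_const _ q.1.2.1).prodMk (hasDerivAt_id' q.1.2.2))).prodMk
      (hasDerivAt_const _ q.2))).deriv

theorem uncurryPotential_phiY3 (hϕ : Differentiable ℝ (uncurryPotential ϕ)) :
    uncurryPotential (phiY3 ϕ) = ∂[(0, 1)] (uncurryPotential ϕ) :=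
  funext fun q => (hasDerivAt_comp_dirDeriv (f := uncurryPotential ϕ) (hϕ q)
    ((hasDerivAt_const _ q.1).prodMk (hasDerivAt_id' q.2))).deriv

theorem uncurryPotential_gradSq3 (hϕ : Differentiable ℝ (uncurryPotential ϕ)) :
    uncurryPotential (gradSq3 ϕ) = spaceGradDot (uncurryPotential ϕ) (uncurryPotential ϕ) := by
  funext q
  rw [spaceGradDot, ← uncurryPotential_phiX1 hϕ, ← uncurryPotential_phiX2 hϕ,
    ← uncurryPotential_phiY3 hϕ]
  simp only [uncurryPotential, gradSq3, pow_two]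

theorem fluidSlice_phiX1 (hϕ : Differentiable ℝ (uncurryPotential ϕ)) (t : ℝ) :
    fluidSlice (uncurryPotential (phiX1 ϕ)) t
      = ∂[((1, 0), 0)] (fluidSlice (uncurryPotential ϕ) t) := by
  funext q
  rw [dirDeriv_fluidSlice hϕ, uncurryPotential_phiX1 hϕ, fluidSlice]

theorem fluidSlice_phiX2 (hϕ : Differentiable ℝ (uncurryPotential ϕ)) (t : ℝ) :
    fluidSlice (uncurryPotential (phiX2 ϕ)) t
      = ∂[((0, 1), 0)] (fluidSlice (uncurryPotential ϕ) t) := by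
  funext q
  rw [dirDeriv_fluidSlice hϕ, uncurryPotential_phiX2 hϕ, fluidSlice]

theorem fluidSlice_phiY3 (hϕ : Differentiable ℝ (uncurryPotential ϕ)) (t : ℝ) :
    fluidSlice (uncurryPotential (phiY3 ϕ)) t
      = ∂[(0, 1)] (fluidSlice (uncurryPotential ϕ) t) := by
  funext q
  rw [dirDeriv_fluidSlice hϕ, uncurryPotential_phiY3 hϕ, fluidSlice]
  rfl

theorem surfaceFlux_slice (hη : Differentiable ℝ (uncurrySurface η))
    (hϕ : Differentiable ℝ (uncurryPotential ϕ)) (t : ℝ) (p : ℝ × ℝ) :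
    surfaceFlux (surfaceSlice (uncurrySurface η) t) (fluidSlice (uncurryPotential ϕ) t) p
      = phiY3 ϕ t p.1 p.2 (η t p.1 p.2)
        - (etaX1 η t p.1 p.2 * phiX1 ϕ t p.1 p.2 (η t p.1 p.2)
          + etaX2 η t p.1 p.2 * phiX2 ϕ t p.1 p.2 (η t p.1 p.2)) := by
  rw [surfaceFlux, dirDeriv_surfaceSlice hη, dirDeriv_surfaceSlice hη,
    ← uncurrySurface_etaX1 hη, ← uncurrySurface_etaX2 hη, ← fluidSlice_phiX1 hϕ,
    ← fluidSlice_phiX2 hϕ, ← fluidSlice_phiY3 hϕ]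
  rfl

theorem energy3D_eq (hϕ : Differentiable ℝ (uncurryPotential ϕ)) (t : ℝ) :
    energy3D L₁ L₂ h g η ϕ t
      = waveEnergy L₁ L₂ h g (uncurrySurface η) (uncurryPotential ϕ) t := by
  rw [waveEnergy, dirichletEnergy, ← uncurryPotential_gradSq3 hϕ]
  rfl

theorem bigP_eq (hϕ : Differentiable ℝ (uncurryPotential ϕ)) :
    bigP L₁ L₂ h T η ϕ
      = 1 / 2 * ∫ t in (0 : ℝ)..T,
        wettedEnergy L₁ L₂ h (uncurrySurface η) (uncurryPotential ϕ) t := by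
  simp only [wettedEnergy, ← uncurryPotential_gradSq3 hϕ]
  rfl

theorem bigB_eq (hη : Differentiable ℝ (uncurrySurface η))
    (hϕ : Differentiable ℝ (uncurryPotential ϕ)) :
    bigB L₁ L₂ g T η ϕ
      = ∫ t in (0 : ℝ)..T, observation L₁ L₂ g (uncurrySurface η) (uncurryPotential ϕ) t := by
  have hψ : Differentiable ℝ (uncurrySurface (psi3 η ϕ)) :=
    hϕ.comp (differentiable_id.prodMk hη)
  have hΘ : observedDensity g (uncurrySurface η) (uncurryPotential ϕ)
      = uncurrySurface (Theta3 g η ϕ) := by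
    funext τ
    have hψT : _ = ∂[(1, 0)] (surfaceTrace (uncurrySurface η) (uncurryPotential ϕ)) τ :=
      congrFun (uncurrySurface_etaT3 hψ) τ
    rw [observedDensity, ← hψT]
    simp only [uncurrySurface, Theta3, psi3T, etaT3]
    ring
  simp only [observation, hΘ]
  rfl

namespace IsWW3D

theorem contDiff_uncurrySurface (hsol : IsWW3D L₁ L₂ h g T η ϕ) :
    ContDiff ℝ 2 (uncurrySurface η) :=
  hsol.smooth_eta.of_le (WithTop.coe_le_coe.2 le_top)

theorem contDiff_uncurryPotential (hsol : IsWW3D L₁ L₂ h g T η ϕ) :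
    ContDiff ℝ 2 (uncurryPotential ϕ) :=
  (hsol.smooth_phi.of_le (WithTop.coe_le_coe.2 le_top)).comp
    (f := fun q : (ℝ × ℝ × ℝ) × ℝ => (q.1.1, q.1.2.1, q.1.2.2, q.2)) (by fun_prop)

theorem isTankFlow (hsol : IsWW3D L₁ L₂ h g T η ϕ) (hL₁ : 0 ≤ L₁) (hL₂ : 0 ≤ L₂) (hh : 0 ≤ h)
    {t : ℝ} (ht : t ∈ Icc 0 T) :
    IsTankFlow L₁ L₂ (-h) (surfaceSlice (uncurrySurface η) t)
      (fluidSlice (uncurryPotential ϕ) t) := by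
  have hϕ : ContDiff ℝ 2 (uncurryPotential ϕ) := hsol.contDiff_uncurryPotential
  have hϕ₁ : Differentiable ℝ (uncurryPotential ϕ) := hϕ.differentiable two_ne_zero
  have hϕ₂ (v : (ℝ × ℝ × ℝ) × ℝ) : Differentiable ℝ (∂[v] (uncurryPotential ϕ)) :=
    (contDiff_dirDeriv hϕ).differentiable one_ne_zero
  have hX₁ := fluidSlice_phiX1 hϕ₁ t
  have hX₂ := fluidSlice_phiX2 hϕ₁ t
  have hY := fluidSlice_phiY3 hϕ₁ t
  have hX₁X₁ := fluidSlice_phiX1 (uncurryPotential_phiX1 hϕ₁ ▸ hϕ₂ _) t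
  have hX₂X₂ := fluidSlice_phiX2 (uncurryPotential_phiX2 hϕ₁ ▸ hϕ₂ _) t
  have hYY := fluidSlice_phiY3 (uncurryPotential_phiY3 hϕ₁ ▸ hϕ₂ _) t
  exact {
    length_nonneg := hL₁
    width_nonneg := hL₂
    contDiff_surface :=
      (hsol.contDiff_uncurrySurface.of_le one_le_two).comp (contDiff_prodMk_right t)
    contDiff_potential := contDiff_fluidSlice hϕ t
    bottom_le := fun p hp =>
      (by linarith : -h ≤ -h / 2).trans (hsol.eta_lower t ht p.1 hp.1 p.2 hp.2)
    harmonic := fun p hp z hz => by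
      rw [← hX₁, ← hX₂, ← hY, ← hX₁X₁, ← hX₂X₂, ← hYY]
      exact hsol.laplace t ht p.1 hp.1 p.2 hp.2 z hz
    wall₁ := hX₁ ▸ hsol.bc_x1 t ht
    wall₂ := hX₂ ▸ hsol.bc_x2 t ht
    bottom := fun p hp => hY ▸ hsol.bc_bottom t ht p.1 hp.1 p.2 hp.2 }

theorem isWaterWave (hsol : IsWW3D L₁ L₂ h g T η ϕ) (hL₁ : 0 ≤ L₁) (hL₂ : 0 ≤ L₂)
    (hh : 0 ≤ h) : IsWaterWave L₁ L₂ h g T (uncurrySurface η) (uncurryPotential ϕ) := by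
  have hη : Differentiable ℝ (uncurrySurface η) :=
    hsol.contDiff_uncurrySurface.differentiable two_ne_zero
  have hϕ : Differentiable ℝ (uncurryPotential ϕ) :=
    hsol.contDiff_uncurryPotential.differentiable two_ne_zero
  exact {
    contDiff_surface := hsol.contDiff_uncurrySurface
    contDiff_potential := hsol.contDiff_uncurryPotential
    isTankFlow := fun t ht => hsol.isTankFlow hL₁ hL₂ hh ht
    kinematic := fun t ht p hp => by
      rw [surfaceFlux_slice hη hϕ, ← uncurrySurface_etaT3 hη]
      exact hsol.kinematic t ht p.1 hp.1 p.2 hp.2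
    bernoulli := fun t ht p hp => by
      rw [← uncurryPotential_phiT3 hϕ, ← uncurryPotential_gradSq3 hϕ]
      exact hsol.bernoulli t ht p.1 hp.1 p.2 hp.2 }

end IsWW3D

end Curried

theorem main_identity_3d_general
    (L₁ L₂ h g T : ℝ) (hT : 0 ≤ T) (η : ℝ → ℝ → ℝ → ℝ) (ϕ : ℝ → ℝ → ℝ → ℝ → ℝ)
    (hw : IsWaterWave L₁ L₂ h g T (uncurrySurface η) (uncurryPotential ϕ)) :
    bigB L₁ L₂ g T η ϕ
      = T / 2 * energy3D L₁ L₂ h g η ϕ 0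
        + bigP L₁ L₂ h T η ϕ
        + 9 / 8 * (∫ t in (0:ℝ)..T, ∫ x₁ in (0:ℝ)..L₁, ∫ x₂ in (0:ℝ)..L₂,
            η t x₁ x₂ * gradXSq3 ϕ t x₁ x₂ (-h))
        + (-(9 / 4) * ∫ t in (0:ℝ)..T, ∫ x₁ in (0:ℝ)..L₁, ∫ x₂ in (0:ℝ)..L₂,
            ∫ y in (-h)..(η t x₁ x₂),
              phiY3 ϕ t x₁ x₂ y
                * (etaX1 η t x₁ x₂ * phiX1 ϕ t x₁ x₂ y
                    + etaX2 η t x₁ x₂ * phiX2 ϕ t x₁ x₂ y))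
        + (-(3 / 4) * ((∫ x₁ in (0:ℝ)..L₁, ∫ x₂ in (0:ℝ)..L₂, η T x₁ x₂ * psi3 η ϕ T x₁ x₂)
              - ∫ x₁ in (0:ℝ)..L₁, ∫ x₂ in (0:ℝ)..L₂, η 0 x₁ x₂ * psi3 η ϕ 0 x₁ x₂)
            - ((∫ x₁ in (0:ℝ)..L₁, ∫ x₂ in (0:ℝ)..L₂,
                  η T x₁ x₂ * (x₁ * psi3X1 η ϕ T x₁ x₂ + x₂ * psi3X2 η ϕ T x₁ x₂))
                - ∫ x₁ in (0:ℝ)..L₁, ∫ x₂ in (0:ℝ)..L₂,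
                    η 0 x₁ x₂ * (x₁ * psi3X1 η ϕ 0 x₁ x₂ + x₂ * psi3X2 η ϕ 0 x₁ x₂))) := by
  have hη : Differentiable ℝ (uncurrySurface η) := hw.contDiff_surface.differentiable two_ne_zero
  have hϕ : Differentiable ℝ (uncurryPotential ϕ) :=
    hw.contDiff_potential.differentiable two_ne_zero
  have hψ : Differentiable ℝ (surfaceTrace (uncurrySurface η) (uncurryPotential ϕ)) :=
    hϕ.comp (differentiable_id.prodMk hη)
  have hψ₁ : uncurrySurface (psi3X1 η ϕ)
      = ∂[(0, 1, 0)] (surfaceTrace (uncurrySurface η) (uncurryPotential ϕ)) :=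
    uncurrySurface_etaX1 hψ
  have hψ₂ : uncurrySurface (psi3X2 η ϕ)
      = ∂[(0, 0, 1)] (surfaceTrace (uncurrySurface η) (uncurryPotential ϕ)) :=
    uncurrySurface_etaX2 hψ
  have hidentity := hw.integral_observation hT
  rw [← energy3D_eq hϕ, ← bigP_eq hϕ, ← bigB_eq hη hϕ] at hidentity
  simp only [bottomTerm, slopeTerm, dilationMoment, ← uncurryPotential_phiX1 hϕ,
    ← uncurryPotential_phiX2 hϕ, ← uncurryPotential_phiY3 hϕ, ← uncurrySurface_etaX1 hη,
    ← uncurrySurface_etaX2 hη, ← hψ₁, ← hψ₂] at hidentity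
  exact hidentity

/-- the main identity (Theorem 4.1) for three-dimensional waves
(`d = 2`): `𝓑(T) = (T/2)𝓗 + P + I₁ + I₂ + I₃`. -/
theorem main_identity_3d
    (L₁ L₂ h g T : ℝ) (hL₁ : 0 < L₁) (hL₂ : 0 < L₂) (hh : 0 < h) (hg : 0 < g) (hT : 0 < T)
    (η : ℝ → ℝ → ℝ → ℝ) (ϕ : ℝ → ℝ → ℝ → ℝ → ℝ)
    (hsol : IsWW3D L₁ L₂ h g T η ϕ) :
    bigB L₁ L₂ g T η ϕ
      = T / 2 * energy3D L₁ L₂ h g η ϕ 0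
        + bigP L₁ L₂ h T η ϕ
        + 9 / 8 * (∫ t in (0:ℝ)..T, ∫ x₁ in (0:ℝ)..L₁, ∫ x₂ in (0:ℝ)..L₂,
            η t x₁ x₂ * gradXSq3 ϕ t x₁ x₂ (-h))
        + (-(9 / 4) * ∫ t in (0:ℝ)..T, ∫ x₁ in (0:ℝ)..L₁, ∫ x₂ in (0:ℝ)..L₂,
            ∫ y in (-h)..(η t x₁ x₂),
              phiY3 ϕ t x₁ x₂ y
                * (etaX1 η t x₁ x₂ * phiX1 ϕ t x₁ x₂ y
                    + etaX2 η t x₁ x₂ * phiX2 ϕ t x₁ x₂ y))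
        + (-(3 / 4) * ((∫ x₁ in (0:ℝ)..L₁, ∫ x₂ in (0:ℝ)..L₂, η T x₁ x₂ * psi3 η ϕ T x₁ x₂)
              - ∫ x₁ in (0:ℝ)..L₁, ∫ x₂ in (0:ℝ)..L₂, η 0 x₁ x₂ * psi3 η ϕ 0 x₁ x₂)
            - ((∫ x₁ in (0:ℝ)..L₁, ∫ x₂ in (0:ℝ)..L₂,
                  η T x₁ x₂ * (x₁ * psi3X1 η ϕ T x₁ x₂ + x₂ * psi3X2 η ϕ T x₁ x₂))
                - ∫ x₁ in (0:ℝ)..L₁, ∫ x₂ in (0:ℝ)..L₂,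
                    η 0 x₁ x₂ * (x₁ * psi3X1 η ϕ 0 x₁ x₂ + x₂ * psi3X2 η ϕ 0 x₁ x₂))) := by
  exact main_identity_3d_general L₁ L₂ h g T hT.le η ϕ (hsol.isWaterWave hL₁.le hL₂.le hh.le)
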